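/- Let m be a (local or global) minimum of G of type k and strength λ. Suppose ν has a finite second moment and that β > 2h(m)/b(m)². Then for μ-almost every realization h there exists A = A(m) > 0 such that for all 0 < a < A and every α with 1 − 1/(2(2k−1)) < α < 1, the sequence of conditional laws P_{n,β}^h( (S_n − n m)/n^α ∈ · | S_n/n ∈ [m−a, m+a] ) satisfies a moderate deviations principle with speed n^{1−2k(1−α)} and rate function I(x) = x²/(2σ²) with σ² = λ^{−1} − β^{−1} if k = 1, and I(x) = λ x^{2k}/(2k)! if k ≥ 2. -/

import Mathlib

open MeasureTheory ProbabilityTheory Real Filter Topology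
open scoped ENNReal NNReal

noncomputable section

/-- The value of a spin encoded as a Boolean. -/
def spin (b : Bool) : ℝ := if b then 1 else -1

/-- Total magnetization of a configuration. -/
def mag {n : ℕ} (σ : Fin n → Bool) : ℝ := ∑ i, spin (σ i)

/-- Gibbs weight of a configuration in the random field Curie-Weiss model. -/
def gibbsWeight (β : ℝ) (h : ℕ → ℝ) (n : ℕ) (σ : Fin n → Bool) : ℝ :=
  Real.exp (β / (2 * n) * (mag σ) ^ 2 + β * ∑ i : Fin n, h i * spin (σ i))

/-- The random field Curie-Weiss Gibbs measure on configurations. -/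
def gibbsMeasure (β : ℝ) (h : ℕ → ℝ) (n : ℕ) : Measure (Fin n → Bool) :=
  (ENNReal.ofReal (∑ σ : Fin n → Bool, gibbsWeight β h n σ))⁻¹ •
    ∑ σ : Fin n → Bool, ENNReal.ofReal (gibbsWeight β h n σ) • Measure.dirac σ

/-- `μ` is the infinite product of `ν` over `ℕ` (characterised by finite marginals). -/
def IsProductMeasure (ν : Measure ℝ) (μ : Measure (ℕ → ℝ)) : Prop :=
  ∀ n : ℕ, μ.map (fun h (i : Fin n) => h (i : ℕ)) = Measure.pi fun _ : Fin n => ν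

/-- extended logarithm, `elog 0 = ⊥`, `elog ⊤ = ⊤`. -/
def elog (x : ℝ≥0∞) : EReal :=
  if x = 0 then ⊥ else if x = ⊤ then ⊤ else ((Real.log x.toReal : ℝ) : EReal)

/-- A sequence of measures satisfies a large deviations principle with given speed and
rate function. -/
def HasLDP (P : ℕ → Measure ℝ) (speed : ℕ → ℝ) (I : ℝ → ℝ≥0∞) : Prop :=
  LowerSemicontinuous I ∧ (∀ c : ℝ, IsCompact {x : ℝ | I x ≤ ENNReal.ofReal c}) ∧
    ∀ C : Set ℝ, MeasurableSet C →
      -(⨅ x ∈ interior C, (I x : EReal)) ≤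
          liminf (fun n => ((((speed n)⁻¹ : ℝ) : EReal)) * elog (P n C)) atTop ∧
        limsup (fun n => ((((speed n)⁻¹ : ℝ) : EReal)) * elog (P n C)) atTop ≤
          -(⨅ x ∈ closure C, (I x : EReal))

/-- The function `G` of the random field Curie-Weiss model. -/
def G (β : ℝ) (ν : Measure ℝ) (x : ℝ) : ℝ :=
  β / 2 * x ^ 2 - ∫ h, Real.log (Real.cosh (β * (x + h))) ∂ν

/-- The finite-volume function `G_n^h`. -/
def Gn (β : ℝ) (h : ℕ → ℝ) (n : ℕ) (x : ℝ) : ℝ :=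
  β / 2 * x ^ 2 - (1 / n) * ∑ i : Fin n, Real.log (Real.cosh (β * (x + h i)))

/-- `m` is a (local or global) minimum of `G` of type `k` and strength `l`. -/
def IsMinOfType (β : ℝ) (ν : Measure ℝ) (m : ℝ) (k : ℕ) (l : ℝ) : Prop :=
  1 ≤ k ∧ 0 < l ∧ (∀ i : ℕ, 1 ≤ i → i ≤ 2 * k - 1 → iteratedDeriv i (G β ν) m = 0) ∧
    iteratedDeriv (2 * k) (G β ν) m = l

/-- The height of a minimum `m` of `G`. -/
def height (β : ℝ) (ν : Measure ℝ) (m : ℝ) : ℝ := G β ν m - ⨅ w, G β ν w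

/-- The broadness of a minimum `m` of `G`. -/
def broadness (β : ℝ) (ν : Measure ℝ) (m : ℝ) : ℝ :=
  sInf ((fun y => |y - m|) '' {y | G β ν y < G β ν m})

/-- The moderate deviations rate function. -/
def mdpRate (β l : ℝ) (k : ℕ) (x : ℝ) : ℝ≥0∞ :=
  if k = 1 then ENNReal.ofReal (x ^ 2 / (2 * (l⁻¹ - β⁻¹)))
  else ENNReal.ofReal (l * x ^ (2 * k) / (Nat.factorial (2 * k)))

/-- The polynomial `P_{2k}`. -/
def P2k (l : ℝ) (k : ℕ) (s : ℝ) : ℝ :=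
  l / (2 * (Nat.factorial (2 * k))) * s ^ (2 * k) - ∑ i ∈ Finset.Icc 1 (2 * k - 1), |s| ^ i



/-! ### Part A: calculus of `tanh` and `G` -/

/-- Empirical mean of `tanh`. -/
def Tn (β : ℝ) (h : ℕ → ℝ) (n : ℕ) (x : ℝ) : ℝ :=
  (1 / n) * ∑ i : Fin n, Real.tanh (β * (x + h i))

/-- Expected `tanh`. -/
def Tbar (β : ℝ) (ν : Measure ℝ) (x : ℝ) : ℝ := ∫ h, Real.tanh (β * (x + h)) ∂ν

lemma my_hasDerivAt_tanh (x : ℝ) : HasDerivAt Real.tanh (1 - Real.tanh x ^ 2) x := by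
  have h := (Real.hasDerivAt_sinh x).div (Real.hasDerivAt_cosh x) (Real.cosh_pos x).ne'
  have e : (Real.sinh / Real.cosh) = Real.tanh := by
    ext y; simp [Real.tanh_eq_sinh_div_cosh]
  rw [e] at h
  refine h.congr_deriv ?_
  rw [Real.tanh_eq_sinh_div_cosh]
  have := (Real.cosh_pos x).ne'
  field_simp

lemma my_abs_tanh_le (x : ℝ) : |Real.tanh x| ≤ 1 := by
  rw [Real.tanh_eq_sinh_div_cosh, abs_div, abs_of_pos (Real.cosh_pos x),
    div_le_one (Real.cosh_pos x)]
  apply abs_le_of_sq_le_sq _ (Real.cosh_pos x).le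
  have := Real.cosh_sq x
  linarith

lemma my_tanh_sq_lt (x : ℝ) : Real.tanh x ^ 2 < 1 := by
  rw [Real.tanh_eq_sinh_div_cosh, div_pow, div_lt_one (pow_pos (Real.cosh_pos x) 2)]
  have := Real.cosh_sq x
  linarith

lemma my_continuous_tanh : Continuous Real.tanh :=
  continuous_iff_continuousAt.2 fun x => (my_hasDerivAt_tanh x).continuousAt

lemma my_tanh_lip (x y : ℝ) : |Real.tanh x - Real.tanh y| ≤ |x - y| := by
  have := convex_univ.norm_image_sub_le_of_norm_hasDerivWithin_le (f := Real.tanh)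
    (f' := fun x => 1 - Real.tanh x ^ 2) (C := 1)
    (fun x _ => (my_hasDerivAt_tanh x).hasDerivWithinAt)
    (fun x _ => by
      have := my_tanh_sq_lt x
      rw [Real.norm_eq_abs, abs_le]; constructor <;> nlinarith [sq_nonneg (Real.tanh x)])
    (Set.mem_univ y) (Set.mem_univ x)
  simpa using this

lemma my_hasDerivAt_logcosh (x : ℝ) :
    HasDerivAt (fun x => Real.log (Real.cosh x)) (Real.tanh x) x := by
  have := (Real.hasDerivAt_cosh x).log (Real.cosh_pos x).ne'
  rwa [← Real.tanh_eq_sinh_div_cosh] at this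

lemma my_logcosh_le_abs (x : ℝ) : |Real.log (Real.cosh x)| ≤ |x| := by
  rw [abs_of_nonneg (Real.log_nonneg (Real.one_le_cosh x))]
  rw [Real.log_le_iff_le_exp (Real.cosh_pos x), ← Real.cosh_abs, Real.cosh_eq]
  have : Real.exp (-|x|) ≤ Real.exp |x| := Real.exp_le_exp.2 (by linarith [abs_nonneg x])
  linarith

lemma my_logcosh_second (y r : ℝ) :
    Real.log (Real.cosh (y + r)) ≤ Real.log (Real.cosh y) + r * Real.tanh y + r ^ 2 / 2 := by
  have hd : ∀ z, HasDerivAt (fun z => z ^ 2 / 2 - Real.log (Real.cosh z)) (z - Real.tanh z) z := by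
    intro z
    have := ((hasDerivAt_pow 2 z).div_const 2).sub (my_hasDerivAt_logcosh z)
    refine this.congr_deriv ?_
    simp
  have hmono : Monotone (fun z => z - Real.tanh z) := by
    intro a b hab
    have := my_tanh_lip b a
    rw [abs_of_nonneg (sub_nonneg.2 hab)] at this
    have := (abs_le.1 this).2
    simp only; linarith
  have hconv : ConvexOn ℝ Set.univ (fun z => z ^ 2 / 2 - Real.log (Real.cosh z)) := by
    apply Monotone.convexOn_univ_of_deriv (fun z => (hd z).differentiableAt)
    have : deriv (fun z => z ^ 2 / 2 - Real.log (Real.cosh z)) = fun z => z - Real.tanh z := by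
      ext z; exact (hd z).deriv
    rw [this]; exact hmono
  have key : y ^ 2 / 2 - Real.log (Real.cosh y) + (y - Real.tanh y) * r
      ≤ (y + r) ^ 2 / 2 - Real.log (Real.cosh (y + r)) := by
    rcases lt_trichotomy r 0 with hr | hr | hr
    · have := hconv.slope_le_of_hasDerivAt (x := y + r) (y := y) trivial trivial (by linarith) (hd y)
      rw [slope_def_field, div_le_iff₀ (by linarith)] at this
      linarith
    · subst hr; simp
    · have := hconv.le_slope_of_hasDerivAt (x := y) (y := y + r) trivial trivial (by linarith) (hd y)
      rw [slope_def_field, le_div_iff₀ (by linarith)] at this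
      linarith
  nlinarith

/-- Uniform bound for polynomials of tanh. -/
lemma my_poly_bound (p : Polynomial ℝ) : ∃ C, ∀ x, |p.eval (Real.tanh x)| ≤ C := by
  obtain ⟨C, hC⟩ := (isCompact_Icc (a := (-1 : ℝ)) (b := 1)).exists_bound_of_continuousOn
    (f := fun x => p.eval x) p.continuous.continuousOn
  exact ⟨C, fun x => hC _ (abs_le.1 (my_abs_tanh_le x))⟩

lemma my_poly_integrable (β : ℝ) (ν : Measure ℝ) [IsProbabilityMeasure ν] (p : Polynomial ℝ)
    (x : ℝ) : Integrable (fun h => p.eval (Real.tanh (β * (x + h)))) ν := by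
  obtain ⟨C, hC⟩ := my_poly_bound p
  refine Integrable.of_bound (C := C) ?_ (Eventually.of_forall fun h => hC _)
  apply Continuous.aestronglyMeasurable
  exact p.continuous.comp (my_continuous_tanh.comp (by fun_prop))

lemma my_poly_hasDerivAt (β : ℝ) (ν : Measure ℝ) [IsProbabilityMeasure ν] (p : Polynomial ℝ)
    (x : ℝ) : HasDerivAt (fun x => ∫ h, p.eval (Real.tanh (β * (x + h))) ∂ν)
      (∫ h, (Polynomial.C β * (p.derivative * (1 - Polynomial.X ^ 2))).eval
        (Real.tanh (β * (x + h))) ∂ν) x := by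
  obtain ⟨C, hC⟩ := my_poly_bound (Polynomial.C β * (p.derivative * (1 - Polynomial.X ^ 2)))
  refine (hasDerivAt_integral_of_dominated_loc_of_deriv_le (μ := ν) (s := Set.univ)
    (F := fun x h => p.eval (Real.tanh (β * (x + h)))) (x₀ := x) (bound := fun _ => C)
    (F' := fun x h => (Polynomial.C β * (p.derivative * (1 - Polynomial.X ^ 2))).eval
        (Real.tanh (β * (x + h)))) Filter.univ_mem
    (Eventually.of_forall fun y => (my_poly_integrable β ν p y).aestronglyMeasurable)
    (my_poly_integrable β ν p x) (my_poly_integrable β ν _ x).aestronglyMeasurable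
    (Eventually.of_forall fun h y _ => hC _) (integrable_const _)
    (Eventually.of_forall fun h y _ => ?_)).2
  have h1 : HasDerivAt (fun y => β * (y + h)) β y := by
    simpa using ((hasDerivAt_id y).add_const h).const_mul β
  have h2 := (p.hasDerivAt (Real.tanh (β * (y + h)))).comp y ((my_hasDerivAt_tanh (β * (y + h))).comp y h1)
  refine h2.congr_deriv ?_
  simp; ring

lemma my_poly_contDiff (β : ℝ) (ν : Measure ℝ) [IsProbabilityMeasure ν] (n : ℕ) :
    ∀ p : Polynomial ℝ, ContDiff ℝ n (fun x => ∫ h, p.eval (Real.tanh (β * (x + h))) ∂ν) := by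
  induction n with
  | zero =>
    intro p
    apply contDiff_zero.2
    exact continuous_iff_continuousAt.2 fun x => (my_poly_hasDerivAt β ν p x).continuousAt
  | succ n ih =>
    intro p
    have : ((n + 1 : ℕ) : WithTop ℕ∞) = (n : WithTop ℕ∞) + 1 := by push_cast; rfl
    rw [this, contDiff_succ_iff_deriv]
    refine ⟨fun x => (my_poly_hasDerivAt β ν p x).differentiableAt, by simp, ?_⟩
    have : deriv (fun x => ∫ h, p.eval (Real.tanh (β * (x + h))) ∂ν) = fun x =>
      ∫ h, (Polynomial.C β * (p.derivative * (1 - Polynomial.X ^ 2))).eval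
        (Real.tanh (β * (x + h))) ∂ν := by
      ext x; exact (my_poly_hasDerivAt β ν p x).deriv
    rw [this]
    exact ih _

lemma my_Tbar_contDiff (β : ℝ) (ν : Measure ℝ) [IsProbabilityMeasure ν] (n : ℕ) :
    ContDiff ℝ n (Tbar β ν) := by
  have := my_poly_contDiff β ν n Polynomial.X
  simp only [Polynomial.eval_X] at this
  exact this

lemma my_Tbar_hasDerivAt (β : ℝ) (ν : Measure ℝ) [IsProbabilityMeasure ν] (x : ℝ) :
    HasDerivAt (Tbar β ν) (β * ∫ h, (1 - Real.tanh (β * (x + h)) ^ 2) ∂ν) x := by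
  have := my_poly_hasDerivAt β ν Polynomial.X x
  rw [← integral_const_mul]
  simp only [Polynomial.eval_X, Polynomial.eval_mul, Polynomial.eval_C, Polynomial.derivative_X,
    one_mul, Polynomial.eval_sub, Polynomial.eval_one, Polynomial.eval_pow] at this
  exact this

lemma my_integrable_abs (ν : Measure ℝ) [IsProbabilityMeasure ν]
    (hmom : Integrable (fun x : ℝ => x ^ 2) ν) : Integrable (fun x : ℝ => |x|) ν := by
  refine Integrable.mono' (hmom.add (integrable_const (1:ℝ))) (by fun_prop)
    (Eventually.of_forall fun x => ?_)
  simp only [Pi.add_apply, Real.norm_eq_abs, abs_abs]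
  nlinarith [sq_abs x, sq_nonneg (|x| - 1), abs_nonneg x]

lemma my_logcosh_integrable (β : ℝ) (ν : Measure ℝ) [IsProbabilityMeasure ν]
    (hmom : Integrable (fun x : ℝ => x ^ 2) ν) (x : ℝ) :
    Integrable (fun h => Real.log (Real.cosh (β * (x + h)))) ν := by
  refine Integrable.mono' (((my_integrable_abs ν hmom).const_mul |β|).add
    (integrable_const (|β| * |x|))) ?_ (Eventually.of_forall fun h => ?_)
  · apply Continuous.aestronglyMeasurable
    have : Continuous (fun x => Real.log (Real.cosh x)) :=
      continuous_iff_continuousAt.2 fun x => (my_hasDerivAt_logcosh x).continuousAt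
    exact this.comp (by fun_prop)
  · refine (my_logcosh_le_abs _).trans ?_
    rw [abs_mul]
    have := abs_add_le x h
    simp only [Pi.add_apply]
    nlinarith [abs_nonneg β]

lemma my_G_hasDerivAt (β : ℝ) (ν : Measure ℝ) [IsProbabilityMeasure ν]
    (hmom : Integrable (fun x : ℝ => x ^ 2) ν) (x : ℝ) :
    HasDerivAt (G β ν) (β * x - β * Tbar β ν x) x := by
  have key := (hasDerivAt_integral_of_dominated_loc_of_deriv_le (μ := ν) (s := Set.univ)
    (F := fun x h => Real.log (Real.cosh (β * (x + h)))) (x₀ := x) (bound := fun _ => |β|)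
    (F' := fun x h => β * Real.tanh (β * (x + h))) Filter.univ_mem
    (Eventually.of_forall fun y => (my_logcosh_integrable β ν hmom y).aestronglyMeasurable)
    (my_logcosh_integrable β ν hmom x)
    (by
      apply Continuous.aestronglyMeasurable
      exact continuous_const.mul (my_continuous_tanh.comp (by fun_prop)))
    (Eventually.of_forall fun h y _ => by
      rw [Real.norm_eq_abs, abs_mul]
      nlinarith [my_abs_tanh_le (β * (y + h)), abs_nonneg β]) (integrable_const _)
    (Eventually.of_forall fun h y _ => by
      have h1 : HasDerivAt (fun y => β * (y + h)) β y := by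
        simpa using ((hasDerivAt_id y).add_const h).const_mul β
      have h2 := (my_hasDerivAt_logcosh (β * (y + h))).comp y h1
      rw [mul_comm]
      exact h2)).2
  have h3 := ((hasDerivAt_pow 2 x).const_mul (β / 2)).sub key
  unfold Tbar
  rw [← integral_const_mul]
  refine h3.congr_deriv ?_
  simp; ring

lemma my_G_contDiff (β : ℝ) (ν : Measure ℝ) [IsProbabilityMeasure ν]
    (hmom : Integrable (fun x : ℝ => x ^ 2) ν) (n : ℕ) : ContDiff ℝ n (G β ν) := by
  have h1 : ContDiff ℝ ((n : WithTop ℕ∞) + 1) (G β ν) := by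
    rw [contDiff_succ_iff_deriv]
    refine ⟨fun x => (my_G_hasDerivAt β ν hmom x).differentiableAt, by simp, ?_⟩
    have : deriv (G β ν) = fun x => β * x - β * Tbar β ν x := by
      ext x; exact (my_G_hasDerivAt β ν hmom x).deriv
    rw [this]
    have := my_Tbar_contDiff β ν n
    fun_prop
  exact h1.of_le le_self_add

lemma my_G_taylor (β : ℝ) (ν : Measure ℝ) [IsProbabilityMeasure ν]
    (hmom : Integrable (fun x : ℝ => x ^ 2) ν) (m : ℝ) (k : ℕ) (l : ℝ)
    (hmin : IsMinOfType β ν m k l) (ε : ℝ) (hε : 0 < ε) :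
    ∃ δ > 0, ∀ v, |v| ≤ δ →
      |G β ν (m + v) - G β ν m - l / (2 * k).factorial * v ^ (2 * k)| ≤ ε * v ^ (2 * k) := by
  obtain ⟨hk, hl, hz, h2k⟩ := hmin
  have ht := taylor_isLittleO_univ (x₀ := m) (my_G_contDiff β ν hmom (2 * k))
  have heval : ∀ x, taylorWithinEval (G β ν) (2 * k) Set.univ m x =
      G β ν m + l / (2 * k).factorial * (x - m) ^ (2 * k) := by
    intro x
    rw [taylor_within_apply, Finset.sum_range_succ, Finset.sum_eq_single_of_mem 0]
    · simp [h2k, iteratedDerivWithin_univ]; ring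
    · simp; omega
    · intro i hi hi0
      rw [iteratedDerivWithin_univ, hz i (by omega) (by simp at hi; omega)]
      simp
  have := ht.def hε
  obtain ⟨δ, hδ, hb⟩ := Metric.eventually_nhds_iff.1 this
  refine ⟨δ / 2, by positivity, fun v hv => ?_⟩
  have h3 := @hb (m + v) (by simp; linarith)
  rw [heval] at h3
  simp only [add_sub_cancel_left, Real.norm_eq_abs] at h3
  have e : |v ^ (2 * k)| = v ^ (2 * k) := abs_of_nonneg (by rw [pow_mul]; positivity)
  rw [e] at h3
  rwa [← sub_sub] at h3

/-- second derivative facts -/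
lemma my_second (β : ℝ) (hβ : 0 < β) (ν : Measure ℝ) [IsProbabilityMeasure ν]
    (hmom : Integrable (fun x : ℝ => x ^ 2) ν) (m : ℝ) (k : ℕ) (l : ℝ)
    (hmin : IsMinOfType β ν m k l) :
    ∃ g2 : ℝ, g2 < β ∧ (k = 1 → g2 = l) ∧ (k ≠ 1 → g2 = 0) ∧
      HasDerivAt (Tbar β ν) (1 - g2 / β) m ∧ Tbar β ν m = m := by
  obtain ⟨hk, hl, hz, h2k⟩ := hmin
  have hdG : deriv (G β ν) = fun x => β * x - β * Tbar β ν x := by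
    ext x; exact (my_G_hasDerivAt β ν hmom x).deriv
  set q := ∫ h, (1 - Real.tanh (β * (m + h)) ^ 2) ∂ν with hq
  have hqint : Integrable (fun h => 1 - Real.tanh (β * (m + h)) ^ 2) ν := by
    have := my_poly_integrable β ν (1 - Polynomial.X ^ 2) m
    simp only [Polynomial.eval_X, Polynomial.eval_sub, Polynomial.eval_one,
      Polynomial.eval_pow] at this
    exact this
  have hqpos : 0 < q := by
    rw [hq, integral_pos_iff_support_of_nonneg
      (fun h => (sub_pos.2 (my_tanh_sq_lt _)).le) hqint]
    have : Function.support (fun h => 1 - Real.tanh (β * (m + h)) ^ 2) = Set.univ := by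
      ext h; simp only [Function.mem_support, Set.mem_univ, iff_true]
      exact (sub_pos.2 (my_tanh_sq_lt _)).ne'
    rw [this]; simp
  have hd2 : iteratedDeriv 2 (G β ν) m = β - β * (β * q) := by
    rw [iteratedDeriv_succ, iteratedDeriv_one, hdG]
    have := ((hasDerivAt_id m).const_mul β).sub ((my_Tbar_hasDerivAt β ν m).const_mul β)
    rw [mul_one] at this
    exact this.deriv
  refine ⟨β - β * (β * q), ?_, ?_, ?_, ?_, ?_⟩
  · have : 0 < β * (β * q) := by positivity
    linarith
  · rintro rfl; rw [← hd2]; exact h2k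
  · intro h1; rw [← hd2]; exact hz 2 (by omega) (by omega)
  · have := my_Tbar_hasDerivAt β ν m
    refine this.congr_deriv ?_
    rw [← hq]
    field_simp; ring
  · have h1 := hz 1 le_rfl (by omega)
    rw [iteratedDeriv_one, hdG] at h1
    have : β * (m - Tbar β ν m) = 0 := by linarith
    rcases mul_eq_zero.1 this with h | h
    · exact absurd h hβ.ne'
    · linarith


/-! ### Part B: deterministic estimates on the Gibbs weights -/

/-- tilted product weight -/
def tilt (β : ℝ) (h : ℕ → ℝ) (n : ℕ) (t : ℝ) (σ : Fin n → Bool) : ℝ :=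
  Real.exp (β * ∑ i : Fin n, (t + h i) * spin (σ i))

/-- total mass of the tilted weight -/
def Zt (β : ℝ) (h : ℕ → ℝ) (n : ℕ) (t : ℝ) : ℝ :=
  2 ^ n * Real.exp (∑ i : Fin n, Real.log (Real.cosh (β * (t + h i))))

lemma my_Zt_pos (β : ℝ) (h : ℕ → ℝ) (n : ℕ) (t : ℝ) : 0 < Zt β h n t := by
  unfold Zt; positivity

lemma my_sum_tilt (β : ℝ) (h : ℕ → ℝ) (n : ℕ) (t : ℝ) :
    ∑ σ : Fin n → Bool, tilt β h n t σ = Zt β h n t := by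
  have h1 : ∀ σ : Fin n → Bool, tilt β h n t σ =
      ∏ i : Fin n, Real.exp (β * ((t + h i) * spin (σ i))) := by
    intro σ
    rw [tilt, Finset.mul_sum, Real.exp_sum]
  simp_rw [h1]
  rw [← Fintype.prod_sum (fun (i : Fin n) (b : Bool) => Real.exp (β * ((t + h i) * spin b)))]
  have h2 : ∀ i : Fin n, ∑ b : Bool, Real.exp (β * ((t + h i) * spin b)) =
      2 * Real.cosh (β * (t + h i)) := by
    intro i
    rw [Fintype.sum_bool, Real.cosh_eq]
    simp [spin]; ring
  simp_rw [h2]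
  rw [Finset.prod_mul_distrib, Zt, Real.exp_sum]
  simp [Real.exp_log (Real.cosh_pos _)]

lemma my_tilt_shift (β : ℝ) (h : ℕ → ℝ) (n : ℕ) (t r : ℝ) (σ : Fin n → Bool) :
    tilt β h n (t + r) σ = Real.exp (β * r * mag σ) * tilt β h n t σ := by
  rw [tilt, tilt, ← Real.exp_add]
  congr 1
  rw [mag, mul_assoc, Finset.mul_sum, Finset.mul_sum, Finset.mul_sum, Finset.mul_sum,
    ← Finset.sum_add_distrib]
  refine Finset.sum_congr rfl fun i _ => ?_
  ring

lemma my_weight_split (β : ℝ) (h : ℕ → ℝ) (n : ℕ) (hn : 1 ≤ n) (t : ℝ) (σ : Fin n → Bool) :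
    gibbsWeight β h n σ =
      Real.exp (n * (β * (mag σ / n - t) ^ 2 / 2 - β * t ^ 2 / 2)) * tilt β h n t σ := by
  have hn' : (n : ℝ) ≠ 0 := by positivity
  have h0 := my_tilt_shift β h n 0 t σ
  rw [zero_add] at h0
  rw [h0, gibbsWeight, tilt, ← Real.exp_add, ← Real.exp_add]
  congr 1
  simp only [zero_add]
  field_simp
  ring

lemma my_Zt_Gn (β : ℝ) (h : ℕ → ℝ) (n : ℕ) (hn : 1 ≤ n) (t : ℝ) :
    Real.exp (n * (- β * t ^ 2 / 2)) * Zt β h n t = 2 ^ n * Real.exp (- n * Gn β h n t) := by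
  have hn' : (n : ℝ) ≠ 0 := by positivity
  rw [Zt, mul_left_comm, ← Real.exp_add]
  congr 2
  rw [Gn]
  field_simp
  ring

lemma my_upper_single (β : ℝ) (h : ℕ → ℝ) (n : ℕ) (hn : 1 ≤ n) (t y : ℝ) :
    ∑ σ : Fin n → Bool with mag σ = y, gibbsWeight β h n σ ≤
      2 ^ n * Real.exp (n * (β * (y / n - t) ^ 2 / 2 - Gn β h n t)) := by
  calc _ = ∑ σ : Fin n → Bool with mag σ = y,
        Real.exp (n * (β * (y / n - t) ^ 2 / 2 - β * t ^ 2 / 2)) * tilt β h n t σ := by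
        refine Finset.sum_congr rfl fun σ hσ => ?_
        rw [my_weight_split β h n hn t, (Finset.mem_filter.1 hσ).2]
    _ = Real.exp (n * (β * (y / n - t) ^ 2 / 2 - β * t ^ 2 / 2)) *
        ∑ σ : Fin n → Bool with mag σ = y, tilt β h n t σ := by rw [Finset.mul_sum]
    _ ≤ Real.exp (n * (β * (y / n - t) ^ 2 / 2 - β * t ^ 2 / 2)) * Zt β h n t := by
        apply mul_le_mul_of_nonneg_left _ (Real.exp_pos _).le
        rw [← my_sum_tilt]
        exact Finset.sum_le_sum_of_subset_of_nonneg (Finset.filter_subset _ _)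
          fun _ _ _ => (Real.exp_pos _).le
    _ = Real.exp (n * (β * (y / n - t) ^ 2 / 2)) *
        (Real.exp (n * (- β * t ^ 2 / 2)) * Zt β h n t) := by
        rw [← mul_assoc, ← Real.exp_add]; congr 2; ring
    _ = _ := by
        rw [my_Zt_Gn β h n hn, mul_left_comm, ← Real.exp_add]; congr 2; ring

lemma my_card_mag (n : ℕ) : ((Finset.univ : Finset (Fin n → Bool)).image mag).card ≤ n + 1 := by
  have : (Finset.univ : Finset (Fin n → Bool)).image mag ⊆
      (Finset.range (n + 1)).image (fun j : ℕ => 2 * (j : ℝ) - n) := by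
    intro y hy
    obtain ⟨σ, -, rfl⟩ := Finset.mem_image.1 hy
    refine Finset.mem_image.2 ⟨(Finset.univ.filter fun i => σ i = true).card, ?_, ?_⟩
    · have := Finset.card_filter_le (Finset.univ : Finset (Fin n)) (fun i => σ i = true)
      simp at this ⊢; omega
    · have e : ∀ i, spin (σ i) = 2 * (if σ i = true then (1:ℝ) else 0) - 1 := by
        intro i; unfold spin; split_ifs <;> norm_num
      rw [mag, Finset.sum_congr rfl fun i _ => e i, Finset.sum_sub_distrib, ← Finset.mul_sum,
        Finset.sum_boole]
      simp
  refine (Finset.card_le_card this).trans (Finset.card_image_le.trans (by simp))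

lemma my_upper_set (β : ℝ) (h : ℕ → ℝ) (n : ℕ) (hn : 1 ≤ n) (B : ℝ)
    (E : Finset (Fin n → Bool))
    (hE : ∀ σ ∈ E, ∃ t, β * (mag σ / n - t) ^ 2 / 2 - Gn β h n t ≤ B) :
    ∑ σ ∈ E, gibbsWeight β h n σ ≤ (n + 1) * (2 ^ n * Real.exp (n * B)) := by
  have hn' : (0 : ℝ) < n := by positivity
  rw [← Finset.sum_fiberwise_of_maps_to (g := mag) (t := E.image mag)
    (fun σ hσ => Finset.mem_image_of_mem _ hσ)]
  calc _ ≤ ∑ y ∈ E.image mag, (2 ^ n * Real.exp (n * B)) := by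
        refine Finset.sum_le_sum fun y hy => ?_
        obtain ⟨σ, hσ, rfl⟩ := Finset.mem_image.1 hy
        obtain ⟨t, ht⟩ := hE σ hσ
        refine le_trans ?_ ((my_upper_single β h n hn t (mag σ)).trans ?_)
        · exact Finset.sum_le_sum_of_subset_of_nonneg
            (Finset.filter_subset_filter _ (Finset.subset_univ _)) fun _ _ _ => (Real.exp_pos _).le
        · gcongr
    _ ≤ _ := by
        rw [Finset.sum_const, nsmul_eq_mul]
        have : ((E.image mag).card : ℝ) ≤ n + 1 := by
          exact_mod_cast (Finset.card_le_card (Finset.image_subset_image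
            (Finset.subset_univ E))).trans (my_card_mag n)
        gcongr

lemma my_Zt_shift (β : ℝ) (h : ℕ → ℝ) (n : ℕ) (hn : 1 ≤ n) (t r : ℝ) :
    Zt β h n (t + r) ≤ Zt β h n t * Real.exp (n * (β * r * Tn β h n t + (β * r) ^ 2 / 2)) := by
  have hn' : (n : ℝ) ≠ 0 := by positivity
  rw [Zt, Zt, mul_assoc, ← Real.exp_add]
  have e : n * (β * r * Tn β h n t + (β * r) ^ 2 / 2) =
      ∑ i : Fin n, (β * r * Real.tanh (β * (t + h i)) + (β * r) ^ 2 / 2) := by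
    rw [Finset.sum_add_distrib, ← Finset.mul_sum, Tn]
    simp
    field_simp
  rw [e, ← Finset.sum_add_distrib]
  gcongr with i _
  have := my_logcosh_second (β * (t + h i)) (β * r)
  rw [show β * (t + r + h i) = β * (t + h i) + β * r by ring]
  linarith

lemma my_tail (β : ℝ) (hβ : 0 < β) (h : ℕ → ℝ) (n : ℕ) (hn : 1 ≤ n) (t p x0 : ℝ)
    (E : Finset (Fin n → Bool)) (hE : ∀ σ ∈ E, 0 ≤ p * (mag σ / n - x0)) :
    ∑ σ ∈ E, tilt β h n t σ ≤
      Zt β h n t * Real.exp (n * (p * (Tn β h n t - x0) + p ^ 2 / 2)) := by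
  have hn' : (0 : ℝ) < n := by positivity
  have hp : β * (p / β) = p := by field_simp
  calc _ ≤ ∑ σ ∈ E, Real.exp (- (n * (p * x0))) * tilt β h n (t + p / β) σ := by
        refine Finset.sum_le_sum fun σ hσ => ?_
        rw [my_tilt_shift, hp, ← mul_assoc, ← Real.exp_add]
        refine le_mul_of_one_le_left (Real.exp_pos _).le (Real.one_le_exp ?_)
        have := mul_nonneg hn'.le (hE σ hσ)
        have e : n * (p * (mag σ / n - x0)) = -(n * (p * x0)) + p * mag σ := by
          field_simp; ring
        linarith
    _ ≤ Real.exp (- (n * (p * x0))) * Zt β h n (t + p / β) := by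
        rw [← Finset.mul_sum, ← my_sum_tilt]
        apply mul_le_mul_of_nonneg_left _ (Real.exp_pos _).le
        exact Finset.sum_le_sum_of_subset_of_nonneg (Finset.subset_univ _)
          fun _ _ _ => (Real.exp_pos _).le
    _ ≤ Real.exp (- (n * (p * x0))) *
        (Zt β h n t * Real.exp (n * (p * Tn β h n t + p ^ 2 / 2))) := by
        have := my_Zt_shift β h n hn t (p / β)
        rw [hp] at this
        gcongr
    _ = _ := by
        rw [mul_left_comm, ← Real.exp_add]; congr 2; ring

lemma my_window (β : ℝ) (hβ : 0 < β) (h : ℕ → ℝ) (n : ℕ) (hn : 1 ≤ n) (t x1 d : ℝ) (hd : 0 < d)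
    (hT : |Tn β h n t - x1| ≤ d / 2) (hx : Real.exp (- (n * d ^ 2 / 8)) ≤ 1 / 4) :
    Zt β h n t / 2 ≤ ∑ σ : Fin n → Bool with |mag σ / n - x1| < d, tilt β h n t σ := by
  have hn' : (0 : ℝ) < n := by positivity
  have hT' := abs_le.1 hT
  have hZ := my_Zt_pos β h n t
  have h1 : ∑ σ : Fin n → Bool with x1 + d ≤ mag σ / n, tilt β h n t σ ≤ Zt β h n t / 4 := by
    refine (my_tail β hβ h n hn t (d / 2) (x1 + d) _ fun σ hσ => ?_).trans ?_
    · have := (Finset.mem_filter.1 hσ).2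
      exact mul_nonneg (by positivity) (by linarith)
    · have : n * (d / 2 * (Tn β h n t - (x1 + d)) + (d / 2) ^ 2 / 2) ≤ - (n * d ^ 2 / 8) := by
        have : d / 2 * (Tn β h n t - (x1 + d)) + (d / 2) ^ 2 / 2 ≤ - (d ^ 2 / 8) := by nlinarith
        have := mul_le_mul_of_nonneg_left this hn'.le
        linarith
      have := (Real.exp_le_exp.2 this).trans hx
      nlinarith
  have h2 : ∑ σ : Fin n → Bool with mag σ / n ≤ x1 - d, tilt β h n t σ ≤ Zt β h n t / 4 := by
    refine (my_tail β hβ h n hn t (-(d / 2)) (x1 - d) _ fun σ hσ => ?_).trans ?_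
    · have := (Finset.mem_filter.1 hσ).2
      exact mul_nonneg_of_nonpos_of_nonpos (by linarith) (by linarith)
    · have : n * (-(d / 2) * (Tn β h n t - (x1 - d)) + (-(d / 2)) ^ 2 / 2) ≤ - (n * d ^ 2 / 8) := by
        have : -(d / 2) * (Tn β h n t - (x1 - d)) + (-(d / 2)) ^ 2 / 2 ≤ - (d ^ 2 / 8) := by
          nlinarith
        have := mul_le_mul_of_nonneg_left this hn'.le
        linarith
      have := (Real.exp_le_exp.2 this).trans hx
      nlinarith
  have h3 : Zt β h n t ≤ ∑ σ : Fin n → Bool with |mag σ / n - x1| < d, tilt β h n t σ +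
      (∑ σ : Fin n → Bool with x1 + d ≤ mag σ / n, tilt β h n t σ +
      ∑ σ : Fin n → Bool with mag σ / n ≤ x1 - d, tilt β h n t σ) := by
    rw [← my_sum_tilt]
    simp only [Finset.sum_filter]
    rw [← Finset.sum_add_distrib, ← Finset.sum_add_distrib]
    refine Finset.sum_le_sum fun σ _ => ?_
    have hpos : 0 < tilt β h n t σ := Real.exp_pos _
    by_cases c1 : x1 + d ≤ mag σ / n
    · rw [if_pos c1]
      have a1 : (0:ℝ) ≤ if |mag σ / n - x1| < d then tilt β h n t σ else 0 := by
        split_ifs <;> linarith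
      have a2 : (0:ℝ) ≤ if mag σ / n ≤ x1 - d then tilt β h n t σ else 0 := by
        split_ifs <;> linarith
      linarith
    · by_cases c2 : mag σ / n ≤ x1 - d
      · rw [if_pos c2, if_neg c1]
        have a1 : (0:ℝ) ≤ if |mag σ / n - x1| < d then tilt β h n t σ else 0 := by
          split_ifs <;> linarith
        linarith
      · rw [if_pos (by rw [abs_lt]; constructor <;> linarith), if_neg c1, if_neg c2]
        simp
  linarith

lemma my_lower_set (β : ℝ) (hβ : 0 < β) (h : ℕ → ℝ) (n : ℕ) (hn : 1 ≤ n) (t x1 d : ℝ)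
    (hd : 0 < d) (hT : |Tn β h n t - x1| ≤ d / 2) (hx : Real.exp (- (n * d ^ 2 / 8)) ≤ 1 / 4)
    (B : ℝ) (hB : ∀ x, |x - x1| < d → B ≤ β * (x - t) ^ 2 / 2) :
    2 ^ n * Real.exp (n * (B - Gn β h n t)) / 2 ≤
      ∑ σ : Fin n → Bool with |mag σ / n - x1| < d, gibbsWeight β h n σ := by
  have hn' : (0 : ℝ) < n := by positivity
  calc _ = Real.exp (n * (B - β * t ^ 2 / 2)) * (Zt β h n t / 2) := by
        have e : Real.exp (n * (B - Gn β h n t)) =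
          Real.exp (n * B) * Real.exp (- n * Gn β h n t) := by
          rw [← Real.exp_add]; congr 1; ring
        rw [e, mul_left_comm, ← my_Zt_Gn β h n hn, ← mul_assoc, ← Real.exp_add, ← mul_div_assoc]
        ring_nf
    _ ≤ Real.exp (n * (B - β * t ^ 2 / 2)) *
        ∑ σ : Fin n → Bool with |mag σ / n - x1| < d, tilt β h n t σ :=
        mul_le_mul_of_nonneg_left (my_window β hβ h n hn t x1 d hd hT hx) (Real.exp_pos _).le
    _ ≤ _ := by
        rw [Finset.mul_sum]
        refine Finset.sum_le_sum fun σ hσ => ?_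
        rw [my_weight_split β h n hn t]
        have := hB _ (Finset.mem_filter.1 hσ).2
        have hp : 0 < tilt β h n t σ := Real.exp_pos _
        gcongr

lemma my_Gn_hasDerivAt (β : ℝ) (h : ℕ → ℝ) (n : ℕ) (x : ℝ) :
    HasDerivAt (Gn β h n) (β * x - β * Tn β h n x) x := by
  have h1 : ∀ i : Fin n, HasDerivAt (fun x => Real.log (Real.cosh (β * (x + h i))))
      (Real.tanh (β * (x + h i)) * β) x := by
    intro i
    have h1 : HasDerivAt (fun y => β * (y + h i)) β x := by
      simpa using ((hasDerivAt_id x).add_const (h i)).const_mul β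
    exact (my_hasDerivAt_logcosh (β * (x + h i))).comp x h1
  have h2 := (HasDerivAt.fun_sum (u := Finset.univ) fun i _ => h1 i).const_mul (1 / (n : ℝ))
  have h3 := ((hasDerivAt_pow 2 x).const_mul (β / 2)).sub h2
  refine h3.congr_deriv ?_
  rw [Tn, ← Finset.sum_mul]
  simp; ring

lemma my_Gn_diff (β : ℝ) (hβ : 0 < β) (ν : Measure ℝ) [IsProbabilityMeasure ν]
    (hmom : Integrable (fun x : ℝ => x ^ 2) ν) (h : ℕ → ℝ) (n : ℕ) (m η : ℝ)
    (hT : ∀ t ∈ Set.Icc (m - 1) (m + 1), |Tn β h n t - Tbar β ν t| ≤ η) (v : ℝ) (hv : |v| ≤ 1) :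
    |(Gn β h n (m + v) - Gn β h n m) - (G β ν (m + v) - G β ν m)| ≤ β * η * |v| := by
  have hv' := abs_le.1 hv
  have := (convex_Icc (m - 1) (m + 1)).norm_image_sub_le_of_norm_hasDerivWithin_le
    (f := fun x => Gn β h n x - G β ν x) (C := β * η)
    (fun x _ => ((my_Gn_hasDerivAt β h n x).sub (my_G_hasDerivAt β ν hmom x)).hasDerivWithinAt)
    (fun x hx => by
      have := hT x hx
      have e : β * x - β * Tn β h n x - (β * x - β * Tbar β ν x) =
        - (β * (Tn β h n x - Tbar β ν x)) := by ring
      rw [e, norm_neg, norm_mul, Real.norm_eq_abs, Real.norm_eq_abs, abs_of_pos hβ]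
      gcongr)
    (x := m) (y := m + v) ⟨by linarith, by linarith⟩ ⟨by linarith, by linarith⟩
  simp only [Real.norm_eq_abs, add_sub_cancel_left] at this
  convert this using 2
  ring


/-! ### Part C: asymptotics -/

/-- normalisation -/
def Nn (β : ℝ) (h : ℕ → ℝ) (m : ℝ) (n : ℕ) : ℝ := 2 ^ n * Real.exp (- n * Gn β h n m)

lemma my_even_pow_nonneg (k : ℕ) (x : ℝ) : 0 ≤ x ^ (2 * k) := by rw [pow_mul]; positivity

lemma my_even_pow_le (k : ℕ) (x R : ℝ) (h : |x| ≤ R) : x ^ (2 * k) ≤ R ^ (2 * k) := by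
  rw [← (even_two_mul k).pow_abs x]
  exact pow_le_pow_left₀ (abs_nonneg x) h _

lemma my_C0 (β : ℝ) (hβ : 0 < β) (ν : Measure ℝ) [IsProbabilityMeasure ν]
    (hmom : Integrable (fun x : ℝ => x ^ 2) ν) (h : ℕ → ℝ) (m L : ℝ) (k : ℕ) (hk : 1 ≤ k)
    (htay : ∀ ε > 0, ∃ δ > 0, ∀ v, |v| ≤ δ →
      |G β ν (m + v) - G β ν m - L * v ^ (2 * k)| ≤ ε * v ^ (2 * k))
    (b : ℕ → ℝ) (hb : ∀ n, 1 ≤ n → 0 < b n) (hb0 : Tendsto b atTop (𝓝 0))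
    (hunif : ∀ ε > 0, ∀ᶠ n in atTop, ∀ t ∈ Set.Icc (m - 1) (m + 1),
      |Tn β h n t - Tbar β ν t| ≤ ε * b n ^ (2 * k - 1))
    (R ε : ℝ) (hR : 0 ≤ R) (hε : 0 < ε) :
    ∀ᶠ n in atTop, ∀ y, |y| ≤ R →
      |Gn β h n (m + b n * y) - Gn β h n m - b n ^ (2 * k) * (L * y ^ (2 * k))| ≤
        ε * b n ^ (2 * k) := by
  have hRk : 0 ≤ R ^ (2 * k) := by positivity
  obtain ⟨δ, hδ, hδ'⟩ := htay (ε / (2 * (R ^ (2 * k) + 1))) (by positivity)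
  have hbR : Tendsto (fun n => b n * R) atTop (𝓝 0) := by simpa using hb0.mul_const R
  filter_upwards [eventually_ge_atTop 1, hunif (ε / (2 * (β * R + 1))) (by positivity),
    hbR.eventually (gt_mem_nhds hδ), hbR.eventually (gt_mem_nhds one_pos)] with n hn h1 h2 h3 y hy
  have hbn := hb n hn
  have hby : |b n * y| ≤ b n * R := by rw [abs_mul, abs_of_pos hbn]; gcongr
  have e1 := hδ' (b n * y) (hby.trans h2.le)
  have e2 := my_Gn_diff β hβ ν hmom h n m _ h1 (b n * y) (hby.trans h3.le)
  have e3 : ε / (2 * (R ^ (2 * k) + 1)) * (b n * y) ^ (2 * k) ≤ ε / 2 * b n ^ (2 * k) := by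
    rw [mul_pow]
    have := my_even_pow_le k y R hy
    have hB : 0 < b n ^ (2 * k) := by positivity
    rw [div_mul_eq_mul_div, div_le_iff₀ (by positivity)]
    have : y ^ (2 * k) ≤ R ^ (2 * k) + 1 := by linarith
    calc ε * (b n ^ (2 * k) * y ^ (2 * k)) ≤ ε * (b n ^ (2 * k) * (R ^ (2 * k) + 1)) := by gcongr
      _ = _ := by ring
  have e4 : β * (ε / (2 * (β * R + 1)) * b n ^ (2 * k - 1)) * |b n * y| ≤ ε / 2 * b n ^ (2 * k) := by
    have hB : b n ^ (2 * k) = b n ^ (2 * k - 1) * b n := by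
      rw [← pow_succ]; congr 1; omega
    rw [hB]
    have hp : 0 < b n ^ (2 * k - 1) := by positivity
    calc β * (ε / (2 * (β * R + 1)) * b n ^ (2 * k - 1)) * |b n * y|
        ≤ β * (ε / (2 * (β * R + 1)) * b n ^ (2 * k - 1)) * (b n * R) := by gcongr
      _ = ε / 2 * (b n ^ (2 * k - 1) * b n) * ((β * R) / (β * R + 1)) := by
        have : β * R + 1 ≠ 0 := by positivity
        field_simp
      _ ≤ ε / 2 * (b n ^ (2 * k - 1) * b n) * 1 := by
        gcongr
        rw [div_le_one (by positivity)]; linarith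
      _ = _ := by ring
  have e5 : b n ^ (2 * k) * (L * y ^ (2 * k)) = L * (b n * y) ^ (2 * k) := by rw [mul_pow]; ring
  rw [e5]
  have a1 := abs_le.1 (e1.trans e3)
  have a2 := abs_le.1 (e2.trans e4)
  rw [abs_le]
  constructor <;> linarith [a1.1, a1.2, a2.1, a2.2]

lemma my_quad (k : ℕ) (c : ℝ) (hc : k = 1 ∨ c = 1) (b : ℝ) :
    (1 - c) * b ^ 2 = (1 - c) * b ^ (2 * k) := by
  rcases hc with rfl | rfl <;> simp

lemma my_C4 (β : ℝ) (hβ : 0 < β) (ν : Measure ℝ) [IsProbabilityMeasure ν]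
    (hmom : Integrable (fun x : ℝ => x ^ 2) ν) (h : ℕ → ℝ) (m L : ℝ) (k : ℕ) (hk : 1 ≤ k)
    (htay : ∀ ε > 0, ∃ δ > 0, ∀ v, |v| ≤ δ →
      |G β ν (m + v) - G β ν m - L * v ^ (2 * k)| ≤ ε * v ^ (2 * k))
    (b : ℕ → ℝ) (hb : ∀ n, 1 ≤ n → 0 < b n) (hb0 : Tendsto b atTop (𝓝 0))
    (hunif : ∀ ε > 0, ∀ᶠ n in atTop, ∀ t ∈ Set.Icc (m - 1) (m + 1),
      |Tn β h n t - Tbar β ν t| ≤ ε * b n ^ (2 * k - 1))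
    (c ρ : ℝ) (hc : k = 1 ∨ c = 1) (hρ : ρ = L * c ^ (2 * k) - β * (1 - c) ^ 2 / 2)
    (A κ : ℝ) (hA1 : A ≤ 1) (hκ : 0 < κ)
    (hcrude : ∀ v, |v| ≤ A → κ * v ^ (2 * k) ≤ G β ν (m + v) - G β ν m)
    (a : ℝ) (ha : a ≤ A)
    (C : Set ℝ) (J ε : ℝ) (hε : 0 < ε) (hJ : ∀ s ∈ C, J ≤ ρ * s ^ (2 * k)) :
    ∀ᶠ n in atTop, ∀ E : Finset (Fin n → Bool),
      (∀ σ ∈ E, |mag σ / n - m| ≤ a ∧ (mag σ / n - m) / b n ∈ C) →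
      ∑ σ ∈ E, gibbsWeight β h n σ ≤
        (n + 1) * (Nn β h m n * Real.exp (- (n * b n ^ (2 * k) * (J - ε)))) := by
  set R := max 1 (2 * J / κ) with hR
  have hR1 : 1 ≤ R := le_max_left _ _
  have hRJ : J ≤ κ / 2 * R := by
    have := le_max_right 1 (2 * J / κ)
    rw [← hR, div_le_iff₀ hκ] at this
    linarith
  filter_upwards [eventually_ge_atTop 1, hunif (κ / (2 * β)) (by positivity),
    my_C0 β hβ ν hmom h m L k hk htay b hb hb0 hunif (|c| * R) ε (by positivity) hε]
    with n hn h1 h2 E hE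
  have hbn := hb n hn
  have key := my_upper_set β h n hn (- Gn β h n m - b n ^ (2 * k) * (J - ε)) E ?_
  · refine key.trans (le_of_eq ?_)
    rw [Nn, mul_assoc (2 ^ n), ← Real.exp_add]
    congr 3; ring
  intro σ hσ
  obtain ⟨hσa, hσC⟩ := hE σ hσ
  obtain ⟨s, hs⟩ : ∃ s, s = (mag σ / n - m) / b n := ⟨_, rfl⟩
  rw [← hs] at hσC
  have hx : mag σ / n = m + b n * s := by rw [hs]; field_simp; ring
  have hJs := hJ s hσC
  rw [hx] at hσa ⊢
  rw [add_sub_cancel_left] at hσa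
  have hB : 0 < b n ^ (2 * k) := by positivity
  rcases le_or_gt |s| R with hsR | hsR
  · refine ⟨m + b n * (c * s), ?_⟩
    have e1 := abs_le.1 (h2 (c * s) (by rw [abs_mul]; gcongr))
    have e2 : β * (m + b n * s - (m + b n * (c * s))) ^ 2 / 2 =
        b n ^ (2 * k) * (β * (1 - c) ^ 2 / 2 * s ^ (2 * k)) := by
      have e3 := my_quad k c hc (b n * s)
      have : β * (m + b n * s - (m + b n * (c * s))) ^ 2 / 2 =
          β / 2 * (1 - c) * ((1 - c) * (b n * s) ^ 2) := by ring
      rw [this, e3, mul_pow]; ring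
    rw [e2]
    have e4 : b n ^ (2 * k) * J ≤ b n ^ (2 * k) * (ρ * s ^ (2 * k)) := by gcongr
    rw [hρ] at e4
    have e5 := e1.1
    rw [mul_pow] at e5
    nlinarith
  · refine ⟨m + b n * s, ?_⟩
    have e1 := hcrude (b n * s) (hσa.trans ha)
    have e2 := abs_le.1 (my_Gn_diff β hβ ν hmom h n m _ h1 (b n * s) (hσa.trans (ha.trans hA1)))
    have e3 : β * (κ / (2 * β) * b n ^ (2 * k - 1)) * |b n * s| = b n ^ (2 * k) * (κ / 2 * |s|) := by
      have hB : b n ^ (2 * k) = b n ^ (2 * k - 1) * b n := by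
        rw [← pow_succ]; congr 1; omega
      rw [hB, abs_mul, abs_of_pos hbn]
      field_simp
    have e4 : |s| ≤ s ^ (2 * k) := by
      rw [← (even_two_mul k).pow_abs s]
      exact le_self_pow₀ (by linarith) (by omega)
    have e5 : J ≤ κ * s ^ (2 * k) - κ / 2 * |s| := by nlinarith
    have e6 := mul_le_mul_of_nonneg_left e5 hB.le
    rw [mul_pow] at e1
    have e7 : 0 ≤ b n ^ (2 * k) * ε := by positivity
    rw [sub_self]
    nlinarith [e2.1]

lemma my_C3 (β : ℝ) (hβ : 0 < β) (ν : Measure ℝ) [IsProbabilityMeasure ν]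
    (hmom : Integrable (fun x : ℝ => x ^ 2) ν) (h : ℕ → ℝ) (m L : ℝ) (k : ℕ) (hk : 1 ≤ k)
    (htay : ∀ ε > 0, ∃ δ > 0, ∀ v, |v| ≤ δ →
      |G β ν (m + v) - G β ν m - L * v ^ (2 * k)| ≤ ε * v ^ (2 * k))
    (b : ℕ → ℝ) (hb : ∀ n, 1 ≤ n → 0 < b n) (hb0 : Tendsto b atTop (𝓝 0))
    (hnb : Tendsto (fun n : ℕ => n * b n ^ 2) atTop atTop)
    (hunif : ∀ ε > 0, ∀ᶠ n in atTop, ∀ t ∈ Set.Icc (m - 1) (m + 1),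
      |Tn β h n t - Tbar β ν t| ≤ ε * b n ^ (2 * k - 1))
    (c ρ : ℝ) (hc : k = 1 ∨ c = 1) (hρ : ρ = L * c ^ (2 * k) - β * (1 - c) ^ 2 / 2)
    (q : ℝ) (hq : HasDerivAt (Tbar β ν) q m) (hqc : q * c = 1) (hTm : Tbar β ν m = m)
    (s0 ε δ0 : ℝ) (hε : 0 < ε) (hδ0 : 0 < δ0) :
    ∃ δ > 0, δ ≤ δ0 ∧ ∀ᶠ n in atTop,
      Nn β h m n * Real.exp (- (n * b n ^ (2 * k) * (ρ * s0 ^ (2 * k) + ε))) / 2 ≤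
      ∑ σ : Fin n → Bool with |mag σ / n - (m + b n * s0)| < b n * δ, gibbsWeight β h n σ := by
  set δ := min δ0 (ε / (2 * (β * |1 - c| * |s0| + 1))) with hδdef
  have hδ : 0 < δ := lt_min hδ0 (by positivity)
  have hδε : β * δ * |1 - c| * |s0| ≤ ε / 2 := by
    have h1 : δ ≤ ε / (2 * (β * |1 - c| * |s0| + 1)) := min_le_right _ _
    rw [le_div_iff₀ (by positivity)] at h1
    nlinarith
  refine ⟨δ, hδ, min_le_left _ _, ?_⟩
  set y := c * s0 with hy
  -- derivative of Tbar
  have hder := (hasDerivAt_iff_isLittleO.1 hq).def (c := δ / (4 * (|y| + 1))) (by positivity)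
  have hbt : Tendsto (fun n => m + b n * y) atTop (𝓝 m) := by
    simpa using (hb0.mul_const y).const_add m
  have hder' := hbt.eventually hder
  have hexp : ∀ᶠ n : ℕ in atTop, Real.exp (- (n * (b n * δ) ^ 2 / 8)) ≤ 1 / 4 := by
    have h1 : Tendsto (fun n : ℕ => (n * b n ^ 2) * (δ ^ 2 / 8)) atTop atTop :=
      hnb.atTop_mul_const (by positivity)
    have h2 := Real.tendsto_exp_neg_atTop_nhds_zero.comp h1
    filter_upwards [h2.eventually (gt_mem_nhds (show (0:ℝ) < 1 / 4 by norm_num))] with n hn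
    refine le_of_eq_of_le ?_ hn.le
    simp only [Function.comp]
    congr 1; ring
  have hbt1 : ∀ᶠ n in atTop, |b n * y| < 1 := by
    have : Tendsto (fun n => |b n * y|) atTop (𝓝 0) := by
      simpa using (hb0.mul_const y).abs
    exact this.eventually (gt_mem_nhds one_pos)
  filter_upwards [eventually_ge_atTop 1, hunif (δ / 4) (by positivity), hder', hexp, hbt1,
    hb0.eventually (gt_mem_nhds one_pos),
    my_C0 β hβ ν hmom h m L k hk htay b hb hb0 hunif |y| (ε / 2) (by positivity) (by positivity)]
    with n hn h1 h2 h3 h4 h5 h6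
  have hbn := hb n hn
  have hn' : (0 : ℝ) < n := by positivity
  have hB : 0 < b n ^ (2 * k) := by positivity
  have h4' := abs_lt.1 h4
  have hT : |Tn β h n (m + b n * y) - (m + b n * s0)| ≤ b n * δ / 2 := by
    have a1 := h1 (m + b n * y) ⟨by linarith, by linarith⟩
    have a2 : b n ^ (2 * k - 1) ≤ b n := by
      have := pow_le_pow_of_le_one hbn.le h5.le (show 1 ≤ 2 * k - 1 by omega)
      simpa using this
    have a3 : δ / 4 * b n ^ (2 * k - 1) ≤ δ / 4 * b n := by gcongr
    simp only [add_sub_cancel_left, smul_eq_mul, Real.norm_eq_abs, hTm] at h2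
    have a4 : b n * y * q = b n * s0 := by
      rw [hy]; calc b n * (c * s0) * q = b n * s0 * (q * c) := by ring
        _ = _ := by rw [hqc, mul_one]
    rw [a4] at h2
    have a5 : δ / (4 * (|y| + 1)) * |b n * y| ≤ δ / 4 * b n := by
      rw [abs_mul (b n), abs_of_pos hbn, div_mul_eq_mul_div, div_le_iff₀ (by positivity)]
      have : 0 ≤ δ * b n := by positivity
      nlinarith
    have b1 := abs_le.1 (a1.trans a3)
    have b2 := abs_le.1 (h2.trans a5)
    rw [abs_le]
    constructor <;> linarith [b1.1, b1.2, b2.1, b2.2]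
  have key := my_lower_set β hβ h n hn (m + b n * y) (m + b n * s0) (b n * δ) (by positivity) hT h3
    (b n ^ (2 * k) * (β * (1 - c) ^ 2 / 2 * s0 ^ (2 * k) - β * δ * |1 - c| * |s0|)) ?_
  · refine le_trans ?_ key
    rw [Nn, mul_assoc (2 ^ n), ← Real.exp_add]
    gcongr
    have e1 := (abs_le.1 (h6 y le_rfl)).2
    have e2 : b n ^ (2 * k) * (β * δ * |1 - c| * |s0|) ≤ b n ^ (2 * k) * (ε / 2) := by gcongr
    rw [hy, mul_pow, ← hy] at e1
    have e3 : - Gn β h n m - b n ^ (2 * k) * (ρ * s0 ^ (2 * k) + ε) ≤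
        b n ^ (2 * k) * (β * (1 - c) ^ 2 / 2 * s0 ^ (2 * k) - β * δ * |1 - c| * |s0|)
          - Gn β h n (m + b n * y) := by
      rw [hρ]; nlinarith
    have e4 := mul_le_mul_of_nonneg_left e3 hn'.le
    linarith
  · intro x hx
    obtain ⟨s, hs⟩ : ∃ s, s = (x - m) / b n := ⟨_, rfl⟩
    have hxs : x = m + b n * s := by rw [hs]; field_simp; ring
    subst hxs
    have hs1 : |s - s0| ≤ δ := by
      have : m + b n * s - (m + b n * s0) = b n * (s - s0) := by ring
      rw [this, abs_mul, abs_of_pos hbn] at hx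
      exact (lt_of_mul_lt_mul_left hx hbn.le).le
    have e0 : (m + b n * s - (m + b n * y)) = b n * ((1 - c) * s0 + (s - s0)) := by rw [hy]; ring
    rw [e0]
    have e1 : b n ^ 2 * ((1 - c) ^ 2 * s0 ^ 2 - 2 * δ * (|1 - c| * |s0|)) ≤
        (b n * ((1 - c) * s0 + (s - s0))) ^ 2 := by
      rw [mul_pow]
      gcongr
      have : -(|1 - c| * |s0| * δ) ≤ (1 - c) * s0 * (s - s0) := by
        have := neg_abs_le ((1 - c) * s0 * (s - s0))
        rw [abs_mul, abs_mul] at this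
        have : |1 - c| * |s0| * |s - s0| ≤ |1 - c| * |s0| * δ := by gcongr
        linarith
      nlinarith [sq_nonneg (s - s0)]
    have e2 : b n ^ (2 * k) * (β * (1 - c) ^ 2 / 2 * s0 ^ (2 * k) - β * δ * |1 - c| * |s0|) =
        β / 2 * (b n ^ 2 * ((1 - c) ^ 2 * s0 ^ 2 - 2 * δ * (|1 - c| * |s0|))) := by
      rcases hc with rfl | rfl
      · simp only [mul_one]; ring
      · simp
    rw [e2]
    have := mul_le_mul_of_nonneg_left e1 (show 0 ≤ β / 2 by positivity)
    linarith


/-! ### Part D: almost sure uniform concentration -/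

lemma my_map_eval (ν : Measure ℝ) [IsProbabilityMeasure ν] (μ : Measure (ℕ → ℝ))
    (hμ : IsProductMeasure ν μ) (i : ℕ) : μ.map (fun h => h i) = ν := by
  have h1 := hμ (i + 1)
  have h2 := (measurePreserving_eval (fun _ : Fin (i + 1) => ν) (Fin.last i)).map_eq
  rw [← h1, Measure.map_map (by fun_prop) (by fun_prop)] at h2
  exact h2

lemma my_indep (ν : Measure ℝ) [IsProbabilityMeasure ν] (μ : Measure (ℕ → ℝ))
    [IsProbabilityMeasure μ] (hμ : IsProductMeasure ν μ) (n : ℕ) :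
    iIndepFun (fun (i : Fin n) (h : ℕ → ℝ) => h i) μ := by
  refine (iIndepFun_iff_map_fun_eq_pi_map (f := fun (i : Fin n) (h : ℕ → ℝ) => h i)
    (fun i : Fin n => (measurable_pi_apply (i : ℕ)).aemeasurable)).2 ?_
  rw [hμ n]
  congr 1
  ext1 i
  exact (my_map_eval ν μ hμ i).symm

lemma my_hoeffding (β : ℝ) (ν : Measure ℝ) [IsProbabilityMeasure ν] (μ : Measure (ℕ → ℝ))
    [IsProbabilityMeasure μ] (hμ : IsProductMeasure ν μ) (n : ℕ) (hn : 1 ≤ n) (t x : ℝ)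
    (hx : 0 ≤ x) (sg : ℝ) (hsg : sg = 1 ∨ sg = -1) :
    μ.real {h | x ≤ sg * (Tn β h n t - Tbar β ν t)} ≤ Real.exp (- (n * x ^ 2 / 2)) := by
  have hn' : (0 : ℝ) < n := by positivity
  have hsq : sg ^ 2 = 1 := by rcases hsg with rfl | rfl <;> norm_num
  have habs : |sg| = 1 := by rcases hsg with rfl | rfl <;> norm_num
  set f : ℝ → ℝ := fun y => sg * Real.tanh (β * (t + y)) with hf
  have hfm : Measurable f :=
    (continuous_const.mul (my_continuous_tanh.comp (by fun_prop))).measurable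
  have hfI : ∀ y, f y ∈ Set.Icc (-1 : ℝ) 1 := by
    intro y
    have : |f y| ≤ 1 := by rw [hf]; simp only [abs_mul, habs, one_mul]; exact my_abs_tanh_le _
    exact abs_le.1 this
  have hint : ∀ i : ℕ, ∫ h : ℕ → ℝ, f (h i) ∂μ = sg * Tbar β ν t := by
    intro i
    have := integral_map (μ := μ) (φ := fun h : ℕ → ℝ => h i)
      (measurable_pi_apply i).aemeasurable
      (f := f) hfm.aestronglyMeasurable
    rw [← this, my_map_eval ν μ hμ i, hf, integral_const_mul, Tbar]
  have hsub : ∀ i ∈ (Finset.univ : Finset (Fin n)),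
      HasSubgaussianMGF (fun h : ℕ → ℝ => f (h i) - sg * Tbar β ν t) 1 μ := by
    intro i _
    have := hasSubgaussianMGF_of_mem_Icc (μ := μ) (X := fun h : ℕ → ℝ => f (h i)) (a := -1) (b := 1)
      (hfm.comp (measurable_pi_apply _)).aemeasurable (Eventually.of_forall fun h => hfI _)
    rw [hint] at this
    convert this using 1
    ext
    norm_num
  have hind : iIndepFun (fun (i : Fin n) (h : ℕ → ℝ) => f (h i) - sg * Tbar β ν t) μ :=
    (my_indep ν μ hμ n).comp (fun _ y => f y - sg * Tbar β ν t) (fun _ => hfm.sub_const _)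
  have key := HasSubgaussianMGF.measure_sum_ge_le_of_iIndepFun hind (c := fun _ => 1)
    hsub (ε := n * x) (by positivity)
  have e : {h : ℕ → ℝ | x ≤ sg * (Tn β h n t - Tbar β ν t)} =
      {h | n * x ≤ ∑ i : Fin n, (f (h i) - sg * Tbar β ν t)} := by
    ext h
    simp only [Set.mem_ofPred_eq, Finset.sum_sub_distrib, hf, ← Finset.mul_sum]
    rw [Tn]
    simp only [Finset.sum_const, Finset.card_univ, Fintype.card_fin, nsmul_eq_mul]
    rw [← mul_le_mul_iff_right₀ hn']
    have : (n : ℝ) * (sg * (1 / n * ∑ i : Fin n, Real.tanh (β * (t + h i)) - Tbar β ν t)) =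
      sg * ∑ i : Fin n, Real.tanh (β * (t + h i)) - n * (sg * Tbar β ν t) := by
      field_simp
    rw [this, mul_left_comm (n : ℝ) sg]
  rw [e]
  refine key.trans (le_of_eq ?_)
  congr 1
  simp
  field_simp

lemma my_Tn_lip (β : ℝ) (hβ : 0 < β) (h : ℕ → ℝ) (n : ℕ) (hn : 1 ≤ n) (s t : ℝ) :
    |Tn β h n s - Tn β h n t| ≤ β * |s - t| := by
  have hn' : (0 : ℝ) < n := by positivity
  rw [Tn, Tn, ← mul_sub, ← Finset.sum_sub_distrib, abs_mul, abs_of_pos (by positivity)]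
  have : |∑ i : Fin n, (Real.tanh (β * (s + h i)) - Real.tanh (β * (t + h i)))| ≤
      ∑ i : Fin n, β * |s - t| := by
    refine (Finset.abs_sum_le_sum_abs _ _).trans (Finset.sum_le_sum fun i _ => ?_)
    refine (my_tanh_lip _ _).trans (le_of_eq ?_)
    rw [← mul_sub, abs_mul, abs_of_pos hβ]; congr 2; ring
  rw [Finset.sum_const, Finset.card_univ, Fintype.card_fin, nsmul_eq_mul] at this
  calc _ ≤ 1 / (n : ℝ) * (n * (β * |s - t|)) := by gcongr
    _ = _ := by field_simp

lemma my_Tbar_lip (β : ℝ) (hβ : 0 < β) (ν : Measure ℝ) [IsProbabilityMeasure ν] (s t : ℝ) :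
    |Tbar β ν s - Tbar β ν t| ≤ β * |s - t| := by
  have hi : ∀ x, Integrable (fun h => Real.tanh (β * (x + h))) ν := by
    intro x
    have := my_poly_integrable β ν Polynomial.X x
    simp only [Polynomial.eval_X] at this
    exact this
  rw [Tbar, Tbar, ← integral_sub (hi s) (hi t)]
  have := norm_integral_le_of_norm_le_const (μ := ν) (C := β * |s - t|)
    (f := fun h => Real.tanh (β * (s + h)) - Real.tanh (β * (t + h)))
    (Eventually.of_forall fun h => by
      refine (my_tanh_lip _ _).trans (le_of_eq ?_)
      rw [← mul_sub, abs_mul, abs_of_pos hβ]; congr 2; ring)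
  simpa using this

lemma my_summable (p : ℝ) (hp : 0 < p) :
    Summable (fun n : ℕ => (2 * ((n : ℝ) + 1)) * Real.exp (- ((n : ℝ) ^ p / 2))) := by
  have h1 : (fun x : ℝ => Real.exp (-(1 / 2) * x)) =o[atTop] fun x : ℝ => x ^ (-3 / p) :=
    isLittleO_exp_neg_mul_rpow_atTop (by norm_num) _
  have h2 : Tendsto (fun n : ℕ => (n : ℝ) ^ p) atTop atTop :=
    (tendsto_rpow_atTop hp).comp tendsto_natCast_atTop_atTop
  have h3 := (h1.comp_tendsto h2).isBigO
  have h4 : (fun n : ℕ => 2 * ((n : ℝ) + 1)) =O[atTop] fun n : ℕ => (n : ℝ) := by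
    refine Asymptotics.IsBigO.of_bound 4 ?_
    filter_upwards [eventually_ge_atTop 1] with n hn
    have : (1 : ℝ) ≤ n := by exact_mod_cast hn
    rw [Real.norm_eq_abs, Real.norm_eq_abs, abs_of_pos (by positivity), abs_of_pos (by positivity)]
    linarith
  refine summable_of_isBigO_nat (g := fun n : ℕ => (n : ℝ) ^ (-2 : ℝ))
    (Real.summable_nat_rpow.2 (by norm_num)) ?_
  refine ((h4.mul h3).congr' ?_ ?_)
  · filter_upwards with n
    simp only [Function.comp]
    congr 2; ring
  · filter_upwards [eventually_ge_atTop 1] with n hn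
    have hn' : (0 : ℝ) < n := by positivity
    simp only [Function.comp]
    rw [← Real.rpow_mul hn'.le, mul_div_cancel₀ _ hp.ne']
    nth_rewrite 1 [← Real.rpow_one (n : ℝ)]
    rw [← Real.rpow_add hn']
    norm_num

lemma my_conc_one (β : ℝ) (hβ : 0 < β) (ν : Measure ℝ) [IsProbabilityMeasure ν]
    (μ : Measure (ℕ → ℝ)) [IsProbabilityMeasure μ] (hμ : IsProductMeasure ν μ) (m p : ℝ)
    (hp : 0 < p) :
    ∀ᵐ h ∂μ, ∀ᶠ n : ℕ in atTop, ∀ t ∈ Set.Icc (m - 1) (m + 1),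
      |Tn β h n t - Tbar β ν t| ≤ (n : ℝ) ^ (-1 / 2 + p) + 4 * β / n := by
  set x : ℕ → ℝ := fun n => (n : ℝ) ^ (-1 / 2 + p) with hx
  set gr : ℕ → ℕ → ℝ := fun n j => m - 1 + 2 * j / n with hgr
  set bad : ℕ → Set (ℕ → ℝ) := fun n => ⋃ j ∈ Finset.range (n + 1),
    ({h | x n ≤ 1 * (Tn β h n (gr n j) - Tbar β ν (gr n j))} ∪
      {h | x n ≤ (-1) * (Tn β h n (gr n j) - Tbar β ν (gr n j))}) with hbad
  have hx0 : ∀ n, 0 ≤ x n := fun n => by positivity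
  have hmeas : ∀ n : ℕ, 1 ≤ n → μ.real (bad n) ≤
      2 * ((n : ℝ) + 1) * Real.exp (- ((n : ℝ) ^ (2 * p) / 2)) := by
    intro n hn
    have hn' : (0 : ℝ) < n := by positivity
    have e : (n : ℝ) * x n ^ 2 = (n : ℝ) ^ (2 * p) := by
      rw [hx]; simp only
      rw [← Real.rpow_natCast, ← Real.rpow_mul hn'.le]
      nth_rewrite 1 [← Real.rpow_one (n : ℝ)]
      rw [← Real.rpow_add hn']
      congr 1; push_cast; ring
    refine (measureReal_biUnion_finset_le _ _).trans ?_
    have : ∀ j ∈ Finset.range (n + 1), μ.real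
      ({h | x n ≤ 1 * (Tn β h n (gr n j) - Tbar β ν (gr n j))} ∪
      {h | x n ≤ (-1) * (Tn β h n (gr n j) - Tbar β ν (gr n j))}) ≤
        2 * Real.exp (- ((n : ℝ) ^ (2 * p) / 2)) := by
      intro j _
      refine (measureReal_union_le _ _).trans ?_
      have h1 := my_hoeffding β ν μ hμ n hn (gr n j) (x n) (hx0 n) 1 (Or.inl rfl)
      have h2 := my_hoeffding β ν μ hμ n hn (gr n j) (x n) (hx0 n) (-1) (Or.inr rfl)
      rw [e] at h1 h2
      linarith
    refine (Finset.sum_le_sum this).trans (le_of_eq ?_)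
    rw [Finset.sum_const, Finset.card_range, nsmul_eq_mul]
    push_cast; ring
  have hsum : ∑' n, μ (bad (n + 1)) ≠ ∞ := by
    have hs := (summable_nat_add_iff 1).2 (my_summable (2 * p) (by positivity))
    refine ne_top_of_le_ne_top (hs.tsum_ofReal_ne_top) ?_
    refine ENNReal.tsum_le_tsum fun n => ?_
    rw [← ofReal_measureReal (measure_ne_top _ _)]
    exact ENNReal.ofReal_le_ofReal (hmeas (n + 1) (by omega))
  filter_upwards [ae_eventually_notMem hsum] with h hh
  obtain ⟨N, hN⟩ := eventually_atTop.1 hh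
  filter_upwards [eventually_ge_atTop (N + 1)] with n hn t ht
  have hn1 : 1 ≤ n := by omega
  have hn0 := hN (n - 1) (by omega)
  rw [Nat.sub_add_cancel hn1] at hn0
  have hn' : (0 : ℝ) < n := by positivity
  have hu0 : 0 ≤ (t - (m - 1)) * n / 2 := by
    have := ht.1
    have : 0 ≤ t - (m - 1) := by linarith
    positivity
  set j := ⌊(t - (m - 1)) * n / 2⌋₊ with hj
  have hj1 : (j : ℝ) ≤ (t - (m - 1)) * n / 2 := Nat.floor_le hu0
  have hj2 : (t - (m - 1)) * n / 2 < j + 1 := Nat.lt_floor_add_one _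
  have hjn : j ∈ Finset.range (n + 1) := by
    have : (j : ℝ) ≤ n := by
      refine hj1.trans ?_
      have : t - (m - 1) ≤ 2 := by linarith [ht.2]
      nlinarith
    have : j ≤ n := by exact_mod_cast this
    simp; omega
  have hdist : |t - gr n j| ≤ 2 / n := by
    have e : t - gr n j = ((t - (m - 1)) * n / 2 - j) * (2 / n) := by
      rw [hgr]; simp only; field_simp; ring
    rw [e, abs_mul, abs_of_pos (show 0 < 2 / (n : ℝ) by positivity)]
    refine mul_le_of_le_one_left (by positivity) ?_
    rw [abs_le]; constructor <;> linarith
  have hgood : |Tn β h n (gr n j) - Tbar β ν (gr n j)| ≤ x n := by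
    rw [hbad] at hn0
    simp only [Set.mem_iUnion, not_exists] at hn0
    have := hn0 j hjn
    simp only [Set.mem_union, Set.mem_ofPred_eq, not_or, not_le] at this
    rw [abs_le]; constructor <;> linarith [this.1, this.2]
  have hxn : x n = (n : ℝ) ^ (-1 / 2 + p) := rfl
  rw [← hxn]
  have l1 := my_Tn_lip β hβ h n hn1 t (gr n j)
  have l2 := my_Tbar_lip β hβ ν t (gr n j)
  have l3 : β * |t - gr n j| ≤ β * (2 / n) := by gcongr
  have b1 := abs_le.1 (l1.trans l3)
  have b2 := abs_le.1 (l2.trans l3)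
  have b3 := abs_le.1 hgood
  have e : 4 * β / n = β * (2 / n) + β * (2 / n) := by ring
  rw [e, abs_le]
  constructor <;> linarith [b1.1, b1.2, b2.1, b2.2, b3.1, b3.2]

lemma my_conc (β : ℝ) (hβ : 0 < β) (ν : Measure ℝ) [IsProbabilityMeasure ν]
    (μ : Measure (ℕ → ℝ)) [IsProbabilityMeasure μ] (hμ : IsProductMeasure ν μ) (m : ℝ) :
    ∀ᵐ h ∂μ, ∀ q : ℝ, q < 1 / 2 → ∀ ε > 0, ∀ᶠ n : ℕ in atTop, ∀ t ∈ Set.Icc (m - 1) (m + 1),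
      |Tn β h n t - Tbar β ν t| ≤ ε * (n : ℝ) ^ (-q) := by
  have h1 : ∀ᵐ h ∂μ, ∀ j : ℕ, ∀ᶠ n : ℕ in atTop, ∀ t ∈ Set.Icc (m - 1) (m + 1),
      |Tn β h n t - Tbar β ν t| ≤ (n : ℝ) ^ (-1 / 2 + 1 / ((j : ℝ) + 1)) + 4 * β / n :=
    ae_all_iff.2 fun j => my_conc_one β hβ ν μ hμ m _ (by positivity)
  filter_upwards [h1] with h hh q hq ε hε
  obtain ⟨j, hj⟩ := exists_nat_one_div_lt (show 0 < 1 / 2 - q by linarith)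
  have t1 : Tendsto (fun n : ℕ => (n : ℝ) ^ (-(1 / 2 - q - 1 / ((j : ℝ) + 1)))) atTop (𝓝 0) :=
    (tendsto_rpow_neg_atTop (by linarith)).comp tendsto_natCast_atTop_atTop
  have t2 : Tendsto (fun n : ℕ => 4 * β * (n : ℝ) ^ (-(1 - q))) atTop (𝓝 0) := by
    simpa using ((tendsto_rpow_neg_atTop (show 0 < 1 - q by linarith)).comp
      tendsto_natCast_atTop_atTop).const_mul (4 * β)
  have t3 := t1.add t2
  rw [add_zero] at t3
  filter_upwards [hh j, eventually_ge_atTop 1, t3.eventually (gt_mem_nhds hε)] with n h2 hn h3 t ht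
  have hn' : (0 : ℝ) < n := by positivity
  refine (h2 t ht).trans ?_
  have e1 : (n : ℝ) ^ (-1 / 2 + 1 / ((j : ℝ) + 1)) =
      (n : ℝ) ^ (-(1 / 2 - q - 1 / ((j : ℝ) + 1))) * (n : ℝ) ^ (-q) := by
    rw [← Real.rpow_add hn']; congr 1; ring
  have e2 : 4 * β / n = 4 * β * (n : ℝ) ^ (-(1 - q)) * (n : ℝ) ^ (-q) := by
    rw [mul_assoc, ← Real.rpow_add hn', div_eq_mul_inv, ← Real.rpow_neg_one]
    congr 2; ring
  rw [e1, e2, ← add_mul]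
  gcongr

/-! ### Part E: the conditional law and the abstract LDP bookkeeping -/

lemma my_ldp_bounds (P : ℕ → Measure ℝ) (p : ℕ → Set ℝ → ℝ) (sp : ℕ → ℝ) (f : ℝ → ℝ)
    (hf : ∀ x, 0 ≤ f x) (hsp : ∀ᶠ n in atTop, 0 < sp n)
    (hP : ∀ᶠ n in atTop, ∀ C, MeasurableSet C → P n C = ENNReal.ofReal (p n C))
    (hup : ∀ C : Set ℝ, ∀ J : ℝ, (∀ s ∈ C, J ≤ f s) → ∀ ε > 0, ∀ᶠ n in atTop,
      p n C ≤ Real.exp (-(sp n * (J - ε))))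
    (hlow : ∀ C : Set ℝ, ∀ s ∈ interior C, ∀ ε > 0, ∀ᶠ n in atTop,
      Real.exp (-(sp n * (f s + ε))) ≤ p n C)
    (C : Set ℝ) (hC : MeasurableSet C) :
      -(⨅ x ∈ interior C, (ENNReal.ofReal (f x) : EReal)) ≤
          liminf (fun n => ((((sp n)⁻¹ : ℝ) : EReal)) * elog (P n C)) atTop ∧
        limsup (fun n => ((((sp n)⁻¹ : ℝ) : EReal)) * elog (P n C)) atTop ≤
          -(⨅ x ∈ closure C, (ENNReal.ofReal (f x) : EReal)) := by
  have hcoe : ∀ x, ((ENNReal.ofReal (f x) : ℝ≥0∞) : EReal) = ((f x : ℝ) : EReal) := by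
    intro x
    rw [EReal.coe_ennreal_ofReal, max_eq_left (hf x)]
  simp only [hcoe]
  have helog : ∀ y : ℝ, 0 < y → elog (ENNReal.ofReal y) = ((Real.log y : ℝ) : EReal) := by
    intro y hy
    rw [elog, if_neg, if_neg ENNReal.ofReal_ne_top, ENNReal.toReal_ofReal hy.le]
    simpa using hy
  constructor
  · refine EReal.ge_of_forall_gt_iff_ge.1 fun z hz => ?_
    rw [EReal.lt_neg_comm] at hz
    simp only [iInf_lt_iff] at hz
    obtain ⟨x, hx, hxz⟩ := hz
    have hxz' : f x < -z := by exact_mod_cast hxz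
    refine le_liminf_of_le (by isBoundedDefault) ?_
    filter_upwards [hsp, hP, hlow C x hx (-z - f x) (by linarith)] with n h1 h2 h3
    have hp : 0 < p n C := (Real.exp_pos _).trans_le h3
    rw [h2 C hC, helog _ hp, ← EReal.coe_mul, EReal.coe_le_coe_iff]
    rw [← Real.le_log_iff_exp_le hp] at h3
    rw [inv_mul_eq_div, le_div_iff₀ h1]
    linarith
  · refine EReal.le_of_forall_lt_iff_le.1 fun z hz => ?_
    obtain ⟨z1, hz1, hz2⟩ := EReal.lt_iff_exists_real_btwn.1 hz
    have hz2' : z1 < z := by exact_mod_cast hz2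
    rw [EReal.neg_lt_comm] at hz1
    have hJ : ∀ s ∈ C, -z1 ≤ f s := by
      intro s hs
      have h1 : (-(z1 : EReal)) < ((f s : ℝ) : EReal) :=
        hz1.trans_le (iInf₂_le s (subset_closure hs))
      have h2 : -z1 < f s := by exact_mod_cast h1
      exact h2.le
    refine limsup_le_of_le (by isBoundedDefault) ?_
    filter_upwards [hsp, hP, hup C (-z1) hJ (z - z1) (by linarith)] with n h1 h2 h3
    rw [h2 C hC]
    by_cases hp : 0 < p n C
    · rw [helog _ hp, ← EReal.coe_mul, EReal.coe_le_coe_iff]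
      rw [← Real.log_le_iff_le_exp hp] at h3
      rw [inv_mul_eq_div, div_le_iff₀ h1]
      linarith
    · rw [ENNReal.ofReal_of_nonpos (not_lt.1 hp), elog, if_pos rfl,
        EReal.coe_mul_bot_of_pos (by positivity)]
      exact bot_le

open Classical in
/-- Total Gibbs weight of the configurations satisfying a predicate. -/
def Wt (β : ℝ) (h : ℕ → ℝ) (n : ℕ) (s : Set (Fin n → Bool)) : ℝ :=
  ∑ σ : Fin n → Bool with σ ∈ s, gibbsWeight β h n σ

lemma my_gw_pos (β : ℝ) (h : ℕ → ℝ) (n : ℕ) (σ : Fin n → Bool) : 0 < gibbsWeight β h n σ :=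
  Real.exp_pos _

lemma my_Wt_nonneg (β : ℝ) (h : ℕ → ℝ) (n : ℕ) (s : Set (Fin n → Bool)) : 0 ≤ Wt β h n s :=
  Finset.sum_nonneg fun σ _ => (my_gw_pos β h n σ).le

lemma my_gibbs_apply (β : ℝ) (h : ℕ → ℝ) (n : ℕ) (s : Set (Fin n → Bool)) :
    gibbsMeasure β h n s = (ENNReal.ofReal (∑ σ : Fin n → Bool, gibbsWeight β h n σ))⁻¹ *
      ENNReal.ofReal (Wt β h n s) := by
  classical
  rw [gibbsMeasure, Measure.smul_apply, smul_eq_mul]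
  congr 1
  rw [Measure.finsetSum_apply, Wt, Finset.sum_filter,
    ENNReal.ofReal_sum_of_nonneg]
  · refine Finset.sum_congr rfl fun σ _ => ?_
    rw [Measure.smul_apply, Measure.dirac_apply' _ s.toFinite.measurableSet, smul_eq_mul]
    by_cases hs : σ ∈ s <;> simp [hs]
  · intro σ _
    split_ifs
    · exact (my_gw_pos β h n σ).le
    · exact le_rfl

lemma my_cond_apply (β : ℝ) (h : ℕ → ℝ) (n : ℕ) (s : Set (Fin n → Bool))
    (X : (Fin n → Bool) → ℝ) (hs : 0 < Wt β h n s) (C : Set ℝ) (hC : MeasurableSet C) :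
    ((gibbsMeasure β h n)[|s]).map X C =
      ENNReal.ofReal (Wt β h n (s ∩ X ⁻¹' C) / Wt β h n s) := by
  have hZ : 0 < ∑ σ : Fin n → Bool, gibbsWeight β h n σ :=
    Finset.sum_pos (fun σ _ => my_gw_pos β h n σ) Finset.univ_nonempty
  rw [Measure.map_apply (measurable_of_finite X) hC, cond_apply s.toFinite.measurableSet,
    my_gibbs_apply, my_gibbs_apply, ← ENNReal.ofReal_inv_of_pos hZ,
    ← ENNReal.ofReal_mul (by positivity), ← ENNReal.ofReal_mul (by positivity),
    ← ENNReal.ofReal_inv_of_pos (by positivity), ← ENNReal.ofReal_mul (by positivity)]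
  congr 1
  field_simp

lemma my_poly_exp (γ ε : ℝ) (hγ : 0 < γ) (hε : 0 < ε) :
    ∀ᶠ n : ℕ in atTop, 2 * ((n : ℝ) + 1) ≤ Real.exp ((n : ℝ) ^ γ * ε) := by
  have h1 := ((isLittleO_log_rpow_atTop hγ).comp_tendsto tendsto_natCast_atTop_atTop).def
    (c := ε / 2) (by positivity)
  have h2 : Tendsto (fun n : ℕ => (n : ℝ) ^ γ) atTop atTop :=
    (tendsto_rpow_atTop hγ).comp tendsto_natCast_atTop_atTop
  filter_upwards [h1, h2.eventually_ge_atTop (2 * Real.log 4 / ε), eventually_ge_atTop 1]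
    with n h3 h4 hn
  have hn' : (1 : ℝ) ≤ n := by exact_mod_cast hn
  have hl : 0 ≤ Real.log n := Real.log_nonneg hn'
  simp only [Function.comp, Real.norm_eq_abs] at h3
  rw [abs_of_nonneg hl, abs_of_nonneg (by positivity)] at h3
  rw [div_le_iff₀ hε] at h4
  have : 2 * ((n : ℝ) + 1) ≤ 4 * n := by linarith
  refine this.trans ?_
  rw [← Real.log_le_iff_le_exp (by positivity), Real.log_mul (by norm_num) (by positivity)]
  linarith

lemma my_Wt_le (β : ℝ) (h : ℕ → ℝ) (n : ℕ) (s : Set (Fin n → Bool)) (B : ℝ)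
    (hB : ∀ E : Finset (Fin n → Bool), (∀ σ ∈ E, σ ∈ s) → ∑ σ ∈ E, gibbsWeight β h n σ ≤ B) :
    Wt β h n s ≤ B := by
  classical
  exact hB _ fun σ hσ => (Finset.mem_filter.1 hσ).2

lemma my_le_Wt (β : ℝ) (h : ℕ → ℝ) (n : ℕ) (s : Set (Fin n → Bool)) (E : Finset (Fin n → Bool))
    (hE : ∀ σ ∈ E, σ ∈ s) : ∑ σ ∈ E, gibbsWeight β h n σ ≤ Wt β h n s := by
  classical
  rw [Wt]
  refine Finset.sum_le_sum_of_subset_of_nonneg ?_ fun σ _ _ => (my_gw_pos β h n σ).le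
  intro σ hσ
  exact Finset.mem_filter.2 ⟨Finset.mem_univ _, hE σ hσ⟩

/-! ### Part F: assembling -/

lemma my_main (β : ℝ) (hβ : 0 < β) (ν : Measure ℝ) [IsProbabilityMeasure ν]
    (hmom : Integrable (fun x : ℝ => x ^ 2) ν) (h : ℕ → ℝ) (m L : ℝ) (k : ℕ) (hk : 1 ≤ k)
    (htay : ∀ ε > 0, ∃ δ > 0, ∀ v, |v| ≤ δ →
      |G β ν (m + v) - G β ν m - L * v ^ (2 * k)| ≤ ε * v ^ (2 * k))
    (hconc : ∀ q : ℝ, q < 1 / 2 → ∀ ε > 0, ∀ᶠ n : ℕ in atTop, ∀ t ∈ Set.Icc (m - 1) (m + 1),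
      |Tn β h n t - Tbar β ν t| ≤ ε * (n : ℝ) ^ (-q))
    (c ρ : ℝ) (hc : k = 1 ∨ c = 1) (hρ : ρ = L * c ^ (2 * k) - β * (1 - c) ^ 2 / 2)
    (hρ0 : 0 < ρ)
    (q : ℝ) (hq : HasDerivAt (Tbar β ν) q m) (hqc : q * c = 1) (hTm : Tbar β ν m = m)
    (A κ : ℝ) (hA1 : A ≤ 1) (hκ : 0 < κ)
    (hcrude : ∀ v, |v| ≤ A → κ * v ^ (2 * k) ≤ G β ν (m + v) - G β ν m)
    (a : ℝ) (ha0 : 0 < a) (ha : a ≤ A) (α : ℝ)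
    (hα : 1 - 1 / (2 * (2 * (k : ℝ) - 1)) < α) (hα1 : α < 1) :
    HasLDP
          (fun n => ((gibbsMeasure β h n)[|{σ : Fin n → Bool |
              mag σ / n ∈ Set.Icc (m - a) (m + a)}]).map
            (fun σ => (mag σ - n * m) / (n : ℝ) ^ α))
          (fun n => (n : ℝ) ^ (1 - 2 * (k : ℝ) * (1 - α)))
          (fun x => ENNReal.ofReal (ρ * x ^ (2 * k))) := by
  have hk' : (1 : ℝ) ≤ k := by exact_mod_cast hk
  have hα2 : (1 - α) * (2 * k - 1) < 1 / 2 := by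
    have h0 : (0 : ℝ) < 2 * k - 1 := by linarith
    have h1 : 1 - α < 1 / (2 * (2 * (k : ℝ) - 1)) := by linarith
    rw [lt_div_iff₀ (by positivity)] at h1
    linarith
  set γ := 1 - 2 * (k : ℝ) * (1 - α) with hγ
  have hα3 : 1 - α < 1 / 2 := by nlinarith
  have hγ0 : 0 < γ := by rw [hγ]; nlinarith
  set b : ℕ → ℝ := fun n => (n : ℝ) ^ (α - 1) with hbdef
  have hbn : ∀ n, b n = (n : ℝ) ^ (α - 1) := fun n => rfl
  have hb : ∀ n, 1 ≤ n → 0 < b n := by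
    intro n hn
    have hn' : (0 : ℝ) < n := by positivity
    rw [hbn]; positivity
  have hb0 : Tendsto b atTop (𝓝 0) := by
    have := (tendsto_rpow_neg_atTop (show 0 < 1 - α by linarith)).comp
      (tendsto_natCast_atTop_atTop (R := ℝ))
    refine this.congr fun n => ?_
    simp only [Function.comp, hbn]
    congr 1; ring
  have hbpow : ∀ n : ℕ, ∀ j : ℕ, b n ^ j = (n : ℝ) ^ ((α - 1) * j) := by
    intro n j
    rw [hbn, Real.rpow_mul (by positivity), Real.rpow_natCast]
  have hnbj : ∀ n : ℕ, 1 ≤ n → ∀ j : ℕ, n * b n ^ j = (n : ℝ) ^ (1 + (α - 1) * j) := by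
    intro n hn j
    have hn' : (0 : ℝ) < n := by positivity
    rw [hbpow, Real.rpow_add hn', Real.rpow_one]
  have hnb : Tendsto (fun n : ℕ => n * b n ^ 2) atTop atTop := by
    have : Tendsto (fun n : ℕ => (n : ℝ) ^ (1 + (α - 1) * (2 : ℕ))) atTop atTop :=
      (tendsto_rpow_atTop (by push_cast; linarith)).comp tendsto_natCast_atTop_atTop
    refine this.congr' ?_
    filter_upwards [eventually_ge_atTop 1] with n hn
    rw [hnbj n hn]
  have hsp : ∀ n : ℕ, 1 ≤ n → n * b n ^ (2 * k) = (n : ℝ) ^ γ := by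
    intro n hn
    rw [hnbj n hn]; congr 1; rw [hγ]; push_cast; ring
  have hunif : ∀ ε > 0, ∀ᶠ n in atTop, ∀ t ∈ Set.Icc (m - 1) (m + 1),
      |Tn β h n t - Tbar β ν t| ≤ ε * b n ^ (2 * k - 1) := by
    intro ε hε
    filter_upwards [hconc _ hα2 ε hε] with n hn t ht
    refine (hn t ht).trans (le_of_eq ?_)
    rw [hbpow, Nat.cast_sub (by omega)]
    congr 2; push_cast; ring
  set f : ℝ → ℝ := fun x => ρ * x ^ (2 * k) with hf
  have hf0 : ∀ x, 0 ≤ f x := fun x => mul_nonneg hρ0.le (my_even_pow_nonneg k x)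
  have hfc : Continuous f := by rw [hf]; fun_prop
  set cd : (n : ℕ) → Set (Fin n → Bool) := fun n =>
    {σ : Fin n → Bool | mag σ / n ∈ Set.Icc (m - a) (m + a)} with hcd
  have hcdm : ∀ n (σ : Fin n → Bool), σ ∈ cd n ↔ |mag σ / n - m| ≤ a := by
    intro n σ
    change mag σ / n ∈ Set.Icc (m - a) (m + a) ↔ _
    rw [Set.mem_Icc, abs_le]
    constructor <;> rintro ⟨h1, h2⟩ <;> constructor <;> linarith
  set X : (n : ℕ) → (Fin n → Bool) → ℝ := fun n σ => (mag σ - n * m) / (n : ℝ) ^ α with hX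
  have hXe : ∀ n : ℕ, 1 ≤ n → ∀ σ : Fin n → Bool, X n σ = (mag σ / n - m) / b n := by
    intro n hn σ
    have hn' : (0 : ℝ) < n := by positivity
    have e : (n : ℝ) ^ α = n * b n := by
      rw [hbn, Real.rpow_sub hn', Real.rpow_one]; field_simp
    have := hb n hn
    simp only [hX, e]
    field_simp
  have hNn : ∀ n, 0 < Nn β h m n := fun n => by rw [Nn]; positivity
  -- generic upper bound
  have hupW : ∀ C : Set ℝ, ∀ J : ℝ, (∀ s ∈ C, J ≤ f s) → ∀ ε > 0, ∀ᶠ n in atTop,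
      Wt β h n (cd n ∩ X n ⁻¹' C) ≤
        (n + 1) * (Nn β h m n * Real.exp (-((n : ℝ) ^ γ * (J - ε)))) := by
    intro C J hJ ε hε
    filter_upwards [my_C4 β hβ ν hmom h m L k hk htay b hb hb0 hunif c ρ hc hρ A κ hA1 hκ hcrude
      a ha C J ε hε hJ, eventually_ge_atTop 1] with n h1 hn
    rw [hsp n hn] at h1
    refine my_Wt_le β h n _ _ fun E hE => h1 E fun σ hσ => ?_
    refine ⟨(hcdm n σ).1 (hE σ hσ).1, ?_⟩
    rw [← hXe n hn]
    exact (hE σ hσ).2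
  -- generic lower bound
  have hlowW : ∀ C : Set ℝ, ∀ s ∈ interior C, ∀ ε > 0, ∀ᶠ n in atTop,
      Nn β h m n * Real.exp (-((n : ℝ) ^ γ * (f s + ε))) / 2 ≤ Wt β h n (cd n ∩ X n ⁻¹' C) := by
    intro C s hs ε hε
    obtain ⟨δ0, hδ0, hball⟩ := Metric.mem_nhds_iff.1 (mem_interior_iff_mem_nhds.1 hs)
    obtain ⟨δ, hδ, hδδ, hev⟩ := my_C3 β hβ ν hmom h m L k hk htay b hb hb0 hnb hunif c ρ hc hρ
      q hq hqc hTm s ε δ0 hε hδ0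
    have hsm : Tendsto (fun n => b n * (|s| + δ)) atTop (𝓝 0) := by
      simpa using hb0.mul_const (|s| + δ)
    filter_upwards [hev, eventually_ge_atTop 1, hsm.eventually (gt_mem_nhds ha0)] with n h1 hn h2
    rw [hsp n hn] at h1
    refine h1.trans ?_
    refine my_le_Wt β h n _ _ fun σ hσ => ?_
    rw [Finset.mem_filter] at hσ
    have hbp := hb n hn
    have h3 := hσ.2
    refine ⟨(hcdm n σ).2 ?_, ?_⟩
    · have e : mag σ / n - m = (mag σ / n - (m + b n * s)) + b n * s := by ring
      rw [e]
      refine (abs_add_le _ _).trans ?_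
      rw [abs_mul, abs_of_pos hbp]
      nlinarith
    · refine hball ?_
      rw [Metric.mem_ball, Real.dist_eq, hXe n hn]
      have e : (mag σ / n - m) / b n - s = (mag σ / n - (m + b n * s)) / b n := by
        field_simp; ring
      rw [e, abs_div, abs_of_pos hbp, div_lt_iff₀ hbp]
      nlinarith
  have hdenlow : ∀ ε > 0, ∀ᶠ n in atTop,
      Nn β h m n * Real.exp (-((n : ℝ) ^ γ * ε)) / 2 ≤ Wt β h n (cd n) := by
    intro ε hε
    filter_upwards [hlowW Set.univ 0 (by simp) ε hε] with n h1
    have e0 : f 0 = 0 := by simp [hf]; omega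
    rwa [e0, zero_add, Set.preimage_univ, Set.inter_univ] at h1
  have hdenup : ∀ ε > 0, ∀ᶠ n in atTop,
      Wt β h n (cd n) ≤ (n + 1) * (Nn β h m n * Real.exp ((n : ℝ) ^ γ * ε)) := by
    intro ε hε
    filter_upwards [hupW Set.univ 0 (fun s _ => hf0 s) ε hε] with n h1
    rw [Set.preimage_univ, Set.inter_univ] at h1
    refine h1.trans (le_of_eq ?_)
    congr 3; ring
  refine ⟨?_, ?_, ?_⟩
  · exact (ENNReal.continuous_ofReal.comp hfc).lowerSemicontinuous
  · intro r
    have e : {x : ℝ | ENNReal.ofReal (f x) ≤ ENNReal.ofReal r} = {x | f x ≤ max r 0} := by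
      ext x
      simp only [Set.mem_ofPred_eq]
      rw [ENNReal.ofReal_le_ofReal_iff', le_max_iff]
    change IsCompact {x : ℝ | ENNReal.ofReal (f x) ≤ ENNReal.ofReal r}
    rw [e]
    refine Metric.isCompact_of_isClosed_isBounded (isClosed_le hfc continuous_const) ?_
    refine (Metric.isBounded_Icc (-(1 + max r 0 / ρ)) (1 + max r 0 / ρ)).subset ?_
    intro x hx
    have hx' : ρ * x ^ (2 * k) ≤ max r 0 := hx
    rw [Set.mem_Icc, ← abs_le]
    rw [← le_div_iff₀' hρ0] at hx'
    by_cases h1 : |x| ≤ 1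
    · have : 0 ≤ max r 0 / ρ := by positivity
      linarith
    · push Not at h1
      have h2 : |x| ≤ x ^ (2 * k) := by
        rw [← (even_two_mul k).pow_abs]
        exact le_self_pow₀ h1.le (by omega)
      linarith
  · refine my_ldp_bounds _ (fun n C => Wt β h n (cd n ∩ X n ⁻¹' C) / Wt β h n (cd n)) _ f hf0
      ?_ ?_ ?_ ?_
    · filter_upwards [eventually_ge_atTop 1] with n hn
      have hn' : (0 : ℝ) < n := by positivity
      positivity
    · filter_upwards [hdenlow 1 one_pos] with n h1 C hC
      refine my_cond_apply β h n (cd n) (X n) (lt_of_lt_of_le ?_ h1) C hC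
      have := hNn n
      positivity
    · intro C J hJ ε hε
      filter_upwards [hupW C J hJ (ε / 3) (by positivity), hdenlow (ε / 3) (by positivity),
        my_poly_exp γ (ε / 3) hγ0 (by positivity)] with n h1 h2 h3
      have hN := hNn n
      have hW : 0 < Wt β h n (cd n) := lt_of_lt_of_le (by positivity) h2
      rw [div_le_iff₀ hW]
      refine h1.trans ?_
      refine le_trans ?_ (mul_le_mul_of_nonneg_left h2 (Real.exp_pos _).le)
      have e1 : Real.exp (-((n : ℝ) ^ γ * (J - ε))) =
        Real.exp ((n : ℝ) ^ γ * (ε / 3)) * Real.exp (-((n : ℝ) ^ γ * (J - ε / 3))) *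
          Real.exp ((n : ℝ) ^ γ * (ε / 3)) := by
        rw [← Real.exp_add, ← Real.exp_add]; congr 1; ring
      have e2 : Real.exp ((n : ℝ) ^ γ * (ε / 3)) * Real.exp (-((n : ℝ) ^ γ * (ε / 3))) = 1 := by
        rw [← Real.exp_add]; simp
      have e3 : Real.exp (-((n : ℝ) ^ γ * (J - ε))) *
          (Nn β h m n * Real.exp (-((n : ℝ) ^ γ * (ε / 3))) / 2) =
          Real.exp ((n : ℝ) ^ γ * (ε / 3)) / 2 *
            (Nn β h m n * Real.exp (-((n : ℝ) ^ γ * (J - ε / 3)))) := by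
        rw [e1]
        linear_combination (Real.exp ((n : ℝ) ^ γ * (ε / 3)) *
          Real.exp (-((n : ℝ) ^ γ * (J - ε / 3))) * Nn β h m n / 2) * e2
      rw [e3]
      refine mul_le_mul_of_nonneg_right ?_ (by positivity)
      linarith
    · intro C s hs ε hε
      filter_upwards [hlowW C s hs (ε / 3) (by positivity), hdenup (ε / 3) (by positivity),
        hdenlow (ε / 3) (by positivity),
        my_poly_exp γ (ε / 3) hγ0 (by positivity)] with n h1 h2 h2' h3
      have hN := hNn n
      have hW : 0 < Wt β h n (cd n) := lt_of_lt_of_le (by positivity) h2'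
      rw [le_div_iff₀ hW]
      refine le_trans ?_ h1
      refine le_trans (mul_le_mul_of_nonneg_left h2 (Real.exp_pos _).le) ?_
      have e1 : Real.exp (-((n : ℝ) ^ γ * (f s + ε / 3))) =
        Real.exp (-((n : ℝ) ^ γ * (f s + ε))) * Real.exp ((n : ℝ) ^ γ * (ε / 3)) *
          Real.exp ((n : ℝ) ^ γ * (ε / 3)) := by
        rw [← Real.exp_add, ← Real.exp_add]; congr 1; ring
      rw [e1]
      have h4 : 0 ≤ Real.exp (-((n : ℝ) ^ γ * (f s + ε))) * Nn β h m n *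
        Real.exp ((n : ℝ) ^ γ * (ε / 3)) := by positivity
      have h5 := mul_le_mul_of_nonneg_left h3 h4
      linarith

lemma my_rate (β l g2 : ℝ) (hβ : 0 < β) (hl : 0 < l) (k : ℕ) (hg : g2 < β)
    (h1 : k = 1 → g2 = l) (h2 : k ≠ 1 → g2 = 0) :
    ∃ c ρ : ℝ, (k = 1 ∨ c = 1) ∧
      ρ = l / (2 * k).factorial * c ^ (2 * k) - β * (1 - c) ^ 2 / 2 ∧ 0 < ρ ∧
      (1 - g2 / β) * c = 1 ∧ mdpRate β l k = fun x => ENNReal.ofReal (ρ * x ^ (2 * k)) := by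
  by_cases hk : k = 1
  · have := h1 hk
    subst this
    subst hk
    have hd : 0 < β - g2 := by linarith
    have e : g2 / (2 * 1).factorial * (β / (β - g2)) ^ (2 * 1) - β * (1 - β / (β - g2)) ^ 2 / 2 =
      g2 * β / (2 * (β - g2)) := by
      norm_num [Nat.factorial]
      field_simp
      ring
    refine ⟨β / (β - g2), _, Or.inl rfl, rfl, ?_, ?_, ?_⟩
    · rw [e]; positivity
    · field_simp
    · rw [e]
      ext1 x
      rw [mdpRate, if_pos rfl]
      congr 1
      have : g2⁻¹ - β⁻¹ = (β - g2) / (g2 * β) := by field_simp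
      rw [this]
      field_simp
  · have := h2 hk
    subst this
    refine ⟨1, _, Or.inr rfl, rfl, ?_, ?_, ?_⟩
    · simp; positivity
    · simp
    · ext1 x
      rw [mdpRate, if_neg hk]
      congr 1
      simp; ring


/-- MDP, conditioned version (Theorem 3.3 of the paper). -/
theorem mdp_conditioned_version
    (β : ℝ) (hβ : 0 < β) (ν : Measure ℝ) [IsProbabilityMeasure ν]
    (hmom : Integrable (fun x : ℝ => x ^ 2) ν)
    (μ : Measure (ℕ → ℝ)) [IsProbabilityMeasure μ] (hμ : IsProductMeasure ν μ)
    (m : ℝ) (k : ℕ) (l : ℝ) (hmin : IsMinOfType β ν m k l)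
    (hcond : 2 * height β ν m / (broadness β ν m) ^ 2 < β) :
    ∀ᵐ h ∂μ, ∃ A > (0 : ℝ), ∀ a : ℝ, 0 < a → a < A →
      ∀ α : ℝ, 1 - 1 / (2 * (2 * (k : ℝ) - 1)) < α → α < 1 →
        HasLDP
          (fun n => ((gibbsMeasure β h n)[|{σ : Fin n → Bool |
              mag σ / n ∈ Set.Icc (m - a) (m + a)}]).map
            (fun σ => (mag σ - n * m) / (n : ℝ) ^ α))
          (fun n => (n : ℝ) ^ (1 - 2 * (k : ℝ) * (1 - α)))
          (mdpRate β l k) := by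
  obtain ⟨hk, hl, -⟩ := id hmin
  obtain ⟨g2, hg2, hgl, hg0, hder, hTm⟩ := my_second β hβ ν hmom m k l hmin
  obtain ⟨c, ρ, hc, hρ, hρ0, hqc, hrate⟩ := my_rate β l g2 hβ hl k hg2 hgl hg0
  have htay := my_G_taylor β ν hmom m k l hmin
  have hL : 0 < l / (2 * k).factorial := by positivity
  obtain ⟨δ, hδ, hδt⟩ := htay (l / (2 * k).factorial / 2) (by positivity)
  filter_upwards [my_conc β hβ ν μ hμ m] with h hconc
  refine ⟨min 1 δ, lt_min one_pos hδ, fun a ha0 ha α hα hα1 => ?_⟩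
  rw [hrate]
  refine my_main β hβ ν hmom h m (l / (2 * k).factorial) k hk htay hconc c ρ hc hρ hρ0
    (1 - g2 / β) hder hqc hTm (min 1 δ) (l / (2 * k).factorial / 2) (min_le_left _ _)
    (by positivity) ?_ a ha0 ha.le α hα hα1
  intro v hv
  have := abs_le.1 (hδt v (hv.trans (min_le_right _ _)))
  linarith [this.1]
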